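/- arXiv:1110.6898 — 11 statements merged into one kernel-verified Lean document; each statement's English description precedes it below -/
import Mathlib

section
/- Let m be a positive integer, q0 = 2^m, q = 2^(2m+1). Suppose (a,b,c,d) and (a',b',c',d') are quadruples of natural numbers with b ≤ 1, b' ≤ 1, c ≤ q0 - 1, c' ≤ q0 - 1, d ≤ q0 - 1, d' ≤ q0 - 1. If a·q + b·(q+q0) + c·(q+2q0) + d·(q+2q0+1) = a'·q + b'·(q+q0) + c'·(q+2q0) + d'·(q+2q0+1), then (a,b,c,d) = (a',b',c',d'). -/
theorem digit_unique (k x y x' y' : ℕ) (hx : x < k) (hx' : x' < k)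
    (h : x + k * y = x' + k * y') : x = x' ∧ y = y' := by
  have h1 : x = x' := by
    have := congrArg (· % k) h
    simpa [Nat.add_mul_mod_self_left, Nat.mod_eq_of_lt hx, Nat.mod_eq_of_lt hx'] using this
  subst h1
  exact ⟨rfl, Nat.eq_of_mul_eq_mul_left (by omega) (Nat.add_left_cancel h)⟩

theorem suzuki_pole_orders_injective
    (m : ℕ) (hm : 1 ≤ m) (q0 q : ℕ) (hq0 : q0 = 2 ^ m) (hq : q = 2 ^ (2 * m + 1))
    (a b c d a' b' c' d' : ℕ)
    (hb : b ≤ 1) (hb' : b' ≤ 1)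
    (hc : c ≤ q0 - 1) (hc' : c' ≤ q0 - 1)
    (hd : d ≤ q0 - 1) (hd' : d' ≤ q0 - 1)
    (heq : a * q + b * (q + q0) + c * (q + 2 * q0) + d * (q + 2 * q0 + 1) =
           a' * q + b' * (q + q0) + c' * (q + 2 * q0) + d' * (q + 2 * q0 + 1)) :
    (a, b, c, d) = (a', b', c', d') := by
  have hpos : 0 < q0 := by rw [hq0]; positivity
  have hqq : q = 2 * q0 * q0 := by rw [hq, hq0]; ring
  subst hqq
  obtain ⟨h1, h2⟩ := digit_unique q0 d
    (a * (2 * q0) + b * (2 * q0 + 1) + c * (2 * q0 + 2) + d * (2 * q0 + 2)) d'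
    (a' * (2 * q0) + b' * (2 * q0 + 1) + c' * (2 * q0 + 2) + d' * (2 * q0 + 2))
    (by omega) (by omega) (by linarith)
  subst h1
  obtain ⟨h3, h4⟩ := digit_unique 2 b (a * q0 + b * q0 + c * (q0 + 1)) b'
    (a' * q0 + b' * q0 + c' * (q0 + 1)) (by omega) (by omega) (by linarith)
  subst h3
  obtain ⟨h5, h6⟩ := digit_unique q0 c (a + c) c' (a' + c')
    (by omega) (by omega) (by linarith)
  subst h5
  have h7 : a = a' := by omega
  rw [h7]
end

section
/- Let m be a positive integer, q0 = 2^m, q = 2^(2m+1), and g = q0·(q-1). Let SG be the additive submonoid of the natural numbers generated by {q, q+q0, q+2q0, q+2q0+1}. Then the number of elements n of SG with 0 ≤ n ≤ 2g - 2 equals g. -/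
/-- Normal form elements. -/
def SuzT (r n : ℕ) : Prop := ∃ a b c d : ℕ, b < 2 ∧ c < r ∧ d < r ∧
  n = a * (2*r*r) + b * (2*r*r + r) + c * (2*r*r + 2*r) + d * (2*r*r + 2*r + 1)

theorem SuzT.addA {r n : ℕ} (h : SuzT r n) (k : ℕ) : SuzT r (n + k * (2*r*r)) := by
  obtain ⟨a, b, c, d, hb, hc, hd, rfl⟩ := h
  exact ⟨a + k, b, c, d, hb, hc, hd, by ring⟩

theorem SuzT.addC {r n : ℕ} (h : SuzT r n) : SuzT r (n + (2*r*r + 2*r)) := by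
  obtain ⟨a, b, c, d, hb, hc, hd, rfl⟩ := h
  by_cases h1 : c + 1 < r
  · exact ⟨a, b, c + 1, d, hb, h1, hd, by ring⟩
  · obtain rfl : r = c + 1 := by omega
    exact ⟨a + (c + 2), b, 0, d, hb, by omega, hd, by ring⟩

theorem SuzT.addB {r n : ℕ} (h : SuzT r n) : SuzT r (n + (2*r*r + r)) := by
  obtain ⟨a, b, c, d, hb, hc, hd, rfl⟩ := h
  by_cases h1 : b = 0
  · subst h1
    exact ⟨a, 1, c, d, by omega, hc, hd, by ring⟩
  · obtain rfl : b = 1 := by omega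
    have h2 : SuzT r (a * (2*r*r) + 0 * (2*r*r + r) + c * (2*r*r + 2*r)
        + d * (2*r*r + 2*r + 1)) := ⟨a, 0, c, d, by omega, hc, hd, rfl⟩
    have h3 := (h2.addC).addA 1
    convert h3 using 1
    ring

theorem SuzT.addD {r n : ℕ} (h : SuzT r n) : SuzT r (n + (2*r*r + 2*r + 1)) := by
  obtain ⟨a, b, c, d, hb, hc, hd, rfl⟩ := h
  by_cases h1 : d + 1 < r
  · exact ⟨a, b, c, d + 1, hb, hc, h1, by ring⟩
  · have h2 : SuzT r (a * (2*r*r) + b * (2*r*r + r) + c * (2*r*r + 2*r)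
        + 0 * (2*r*r + 2*r + 1)) := ⟨a, b, c, 0, hb, hc, by omega, rfl⟩
    have h3 := (h2.addB).addA r
    convert h3 using 1
    obtain rfl : r = d + 1 := by omega
    ring

theorem suz_mem_iff (r n : ℕ) (hr : 1 ≤ r) :
    n ∈ AddSubmonoid.closure ({2*r*r, 2*r*r + r, 2*r*r + 2 * r, 2*r*r + 2 * r + 1} : Set ℕ)
      ↔ SuzT r n := by
  constructor
  · intro h
    induction h using AddSubmonoid.closure_induction_right with
    | zero => exact ⟨0, 0, 0, 0, by omega, by omega, by omega, by ring⟩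
    | add_right x hx y hy ih =>
      simp only [Set.mem_insert_iff, Set.mem_singleton_iff] at hy
      rcases hy with rfl | rfl | rfl | rfl
      · simpa using ih.addA 1
      · exact ih.addB
      · exact ih.addC
      · exact ih.addD
  · rintro ⟨a, b, c, d, -, -, -, rfl⟩
    have key : ∀ k x : ℕ, x ∈ ({2*r*r, 2*r*r + r, 2*r*r + 2 * r, 2*r*r + 2 * r + 1} : Set ℕ) →
        k * x ∈ AddSubmonoid.closure
          ({2*r*r, 2*r*r + r, 2*r*r + 2 * r, 2*r*r + 2 * r + 1} : Set ℕ) := by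
      intro k x hx
      rw [← smul_eq_mul]
      exact AddSubmonoid.nsmul_mem _ (AddSubmonoid.subset_closure hx) k
    refine add_mem (add_mem (add_mem ?_ ?_) ?_) ?_ <;> apply key <;> simp

theorem suz_frob (r N : ℕ) (hN : N + 2 * r + 1 = 2 * r * (2*r*r)) : ¬ SuzT r N := by
  rintro ⟨a, b, c, d, hb, hc, hd, rfl⟩
  have h1 : r ∣ d + 1 := by
    have : r ∣ (d + 1) + r * (a * (2*r) + b * (2*r + 1) + c * (2*r + 2) + d * (2*r + 2) + 2) :=
      ⟨2 * (2*r*r), by linarith⟩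
    exact (Nat.dvd_add_left (Dvd.intro _ rfl)).1 this
  obtain rfl : r = d + 1 := by
    have := Nat.le_of_dvd (by omega) h1
    omega
  have h2 : a * (2*(d+1)) + b * (2*(d+1) + 1) + c * (2*(d+1) + 2) + d * (2*(d+1) + 2) + 3
      = 4 * (d+1) * (d+1) := by
    apply Nat.eq_of_mul_eq_mul_left (show 0 < d + 1 by omega)
    linarith
  obtain rfl : b = 1 := by
    by_contra hb1
    obtain rfl : b = 0 := by omega
    have : 2 * (a * (d+1) + c * (d+2) + d * (d+2) + 1) + 1 = 2 * (2 * (d+1) * (d+1)) := by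
      linarith
    omega
  have h3 : a * (d+1) + c * (d+2) + d * (d + 2) + (d+1) + 2 = 2 * (d+1) * (d+1) := by linarith
  have h4 : d + 1 ∣ c + 1 := by
    have : d + 1 ∣ (c + 1) + (d+1) * (a + c + (d+1) + 1) := ⟨2 * (d+1), by linarith⟩
    exact (Nat.dvd_add_left (Dvd.intro _ rfl)).1 this
  obtain rfl : c = d := by
    have := Nat.le_of_dvd (by omega) h4
    omega
  nlinarith

theorem suz_or (r n k : ℕ) (hr : 1 ≤ r) (hN : n + k + 2 * r + 1 = 2 * r * (2*r*r)) :
    SuzT r n ∨ SuzT r k := by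
  have hr' : (0:ℤ) < r := by exact_mod_cast hr
  obtain ⟨a, b, c, d, hb0, hb, hc0, hc, hd0, hd, hn⟩ : ∃ a b c d : ℤ, 0 ≤ b ∧ b < 2 ∧ 0 ≤ c ∧
      c < r ∧ 0 ≤ d ∧ d < r ∧ (n:ℤ) = a * (2*r*r) + b * (2*r*r + r) + c * (2*r*r + 2*r)
        + d * (2*r*r + 2*r + 1) := by
    obtain ⟨d, hd⟩ : ∃ d, d = (n:ℤ) % r := ⟨_, rfl⟩
    obtain ⟨j, hj⟩ : ∃ j, j = (n:ℤ) / r - 2 * d := ⟨_, rfl⟩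
    refine ⟨j / 2 / r - j % 2 - j / 2 % r - d, j % 2, j / 2 % r, d, by omega, by omega,
      Int.emod_nonneg _ hr'.ne', Int.emod_lt_of_pos _ hr', hd ▸ Int.emod_nonneg _ hr'.ne',
      hd ▸ Int.emod_lt_of_pos _ hr', ?_⟩
    have e1 := Int.emod_add_mul_ediv (n:ℤ) r
    have e2 := Int.emod_add_mul_ediv j 2
    have e3 := Int.emod_add_mul_ediv (j/2) r
    rw [← hd] at e1
    have e4 : (n:ℤ) / r = j + 2 * d := by omega
    rw [e4] at e1
    linear_combination -e1 - r * e2 - 2 * r * e3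
  lift b to ℕ using hb0
  lift c to ℕ using hc0
  lift d to ℕ using hd0
  by_cases ha : 0 ≤ a
  · left
    lift a to ℕ using ha
    exact ⟨a, b, c, d, by omega, by omega, by omega, by exact_mod_cast hn⟩
  · right
    obtain ⟨a', ha'⟩ := Int.eq_ofNat_of_zero_le (show 0 ≤ -1 - a by omega)
    obtain ⟨b', hb'⟩ := Int.eq_ofNat_of_zero_le (show (0:ℤ) ≤ 1 - b by omega)
    obtain ⟨c', hc'⟩ := Int.eq_ofNat_of_zero_le (show (0:ℤ) ≤ r - 1 - c by omega)
    obtain ⟨d', hd'⟩ := Int.eq_ofNat_of_zero_le (show (0:ℤ) ≤ r - 1 - d by omega)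
    refine ⟨a', b', c', d', by omega, by omega, by omega, ?_⟩
    zify at hN ⊢
    rw [← ha', ← hb', ← hc', ← hd']
    linear_combination hN - hn

theorem suz_count (P : ℕ → Prop) [DecidablePred P] (g : ℕ)
    (h : ∀ n k, n + k + 1 = 2 * g → (P n ↔ ¬ P k)) :
    ((Finset.range (2 * g)).filter P).card = g := by
  have h1 : ((Finset.range (2 * g)).filter P).card
      = ((Finset.range (2 * g)).filter (fun n => ¬ P n)).card := by
    refine Finset.card_bij' (fun n _ => 2 * g - 1 - n) (fun n _ => 2 * g - 1 - n) ?_ ?_ ?_ ?_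
    · intro n hn
      simp only [Finset.mem_filter, Finset.mem_range] at hn ⊢
      exact ⟨by omega, (h n (2 * g - 1 - n) (by omega)).1 hn.2⟩
    · intro n hn
      simp only [Finset.mem_filter, Finset.mem_range] at hn ⊢
      exact ⟨by omega, (h (2 * g - 1 - n) n (by omega)).2 hn.2⟩
    · intro n hn
      simp only [Finset.mem_filter, Finset.mem_range] at hn
      omega
    · intro n hn
      simp only [Finset.mem_filter, Finset.mem_range] at hn
      omega
  have h2 := Finset.card_filter_add_card_filter_not (s := Finset.range (2 * g)) P
  rw [Finset.card_range] at h2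
  omega

theorem suzuki_semigroup_count
    (m : ℕ) (hm : 1 ≤ m) (q0 q g : ℕ)
    (hq0 : q0 = 2 ^ m) (hq : q = 2 ^ (2 * m + 1)) (hg : g = q0 * (q - 1)) :
    {n : ℕ | n ∈ AddSubmonoid.closure ({q, q + q0, q + 2 * q0, q + 2 * q0 + 1} : Set ℕ) ∧
      n ≤ 2 * g - 2}.ncard = g := by
  classical
  have hr : 1 ≤ q0 := hq0 ▸ Nat.one_le_two_pow
  have hq' : q = 2 * q0 * q0 := by rw [hq, hq0]; ring
  clear hq hq0
  subst hq'
  have hgp : 2 * g + 2 * q0 = 2 * q0 * (2 * q0 * q0) := by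
    obtain ⟨t, ht⟩ : ∃ t, 2 * q0 * q0 = t + 1 := ⟨2 * q0 * q0 - 1, by
      have : 0 < 2 * q0 * q0 := by positivity
      omega⟩
    rw [hg, ht, Nat.add_sub_cancel]
    ring
  have hg1 : 1 ≤ g := by nlinarith [Nat.mul_le_mul hr hr]
  have hfrob : ¬ SuzT q0 (2 * g - 1) := suz_frob q0 _ (by omega)
  have hc := suz_count (SuzT q0) g (by
    intro n k hnk
    constructor
    · intro h1 h2
      apply hfrob
      rw [← suz_mem_iff q0 _ hr] at h1 h2 ⊢
      have := add_mem h1 h2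
      rwa [show n + k = 2 * g - 1 by omega] at this
    · intro h
      exact (suz_or q0 n k hr (by omega)).resolve_right h)
  have hset : {n : ℕ | n ∈ AddSubmonoid.closure ({2 * q0 * q0, 2 * q0 * q0 + q0,
      2 * q0 * q0 + 2 * q0, 2 * q0 * q0 + 2 * q0 + 1} : Set ℕ) ∧ n ≤ 2 * g - 2}
      = (((Finset.range (2 * g)).filter (SuzT q0) : Finset ℕ) : Set ℕ) := by
    ext n
    simp only [Set.mem_ofPred_eq, suz_mem_iff q0 _ hr, Finset.coe_filter, Finset.mem_range]
    constructor
    · rintro ⟨h1, h2⟩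
      exact ⟨by omega, h1⟩
    · rintro ⟨h1, h2⟩
      refine ⟨h2, ?_⟩
      by_contra h3
      obtain rfl : n = 2 * g - 1 := by omega
      exact hfrob h2
  rw [hset, Set.ncard_coe_finset, hc]
end

section
/- Let m be a positive integer, q0 = 2^m, q = 2^(2m+1), and g = q0·(q-1). Then the number of quadruples (a,b,c,d) of natural numbers with b ≤ 1, c ≤ q0 - 1, d ≤ q0 - 1, and a·q + b·(q+q0) + c·(q+2q0) + d·(q+2q0+1) ≤ 2g - 2 equals g. -/
lemma suzuki_key (Q a b c d : ℕ) (hQ : 2 ≤ Q) (hb : b < 2) (hc : c < Q) (hd : d < Q) :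
    a * (2 * Q * Q) + b * (2 * Q * Q + Q) + c * (2 * Q * Q + 2 * Q) + d * (2 * Q * Q + 2 * Q + 1)
      ≤ 2 * (Q * (2 * Q * Q - 1)) - 2 ↔
    a < 2 * Q - (b + c + d + if Q - 1 ≤ c + d then 1 else 0) := by
  have e1 : 2 * (Q * (2 * Q * Q - 1)) - 2 + (2 * Q + 2) = 2 * Q * (2 * Q * Q) := by
    have h1 : 1 ≤ 2 * Q * Q := by nlinarith
    obtain ⟨k, hk⟩ := Nat.exists_eq_add_of_le h1
    have h2 : 2 ≤ 2 * (Q * k) := by nlinarith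
    have h3 : 2 * Q * Q - 1 = k := by omega
    rw [h3, hk]
    have : 2 * Q * (1 + k) = 2 * (Q * k) + 2 * Q := by ring
    omega
  have e2 : a * (2 * Q * Q) + b * (2 * Q * Q + Q) + c * (2 * Q * Q + 2 * Q)
      + d * (2 * Q * Q + 2 * Q + 1) = (a + b + c + d) * (2 * Q * Q) + Q * (b + 2 * c + 2 * d) + d := by
    ring
  rw [e2]
  generalize 2 * (Q * (2 * Q * Q - 1)) - 2 = G at *
  obtain ⟨P, rfl⟩ : ∃ P, Q = P + 2 := ⟨Q - 2, by omega⟩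
  obtain ⟨s, hs⟩ : ∃ s, s = a + b + c + d := ⟨_, rfl⟩
  obtain ⟨t, ht⟩ : ∃ t, t = b + 2 * c + 2 * d := ⟨_, rfl⟩
  rw [← hs, ← ht]
  split_ifs with h
  · constructor
    · intro H
      by_contra hn
      have h1 : 2 * P + 3 ≤ s := by omega
      have h2 : 2 * P + 2 ≤ t := by omega
      have h3 := Nat.mul_le_mul_right (2 * (P + 2) * (P + 2)) h1
      have h4 := Nat.mul_le_mul_left (P + 2) h2
      nlinarith
    · intro H
      have h1 : s ≤ 2 * P + 2 := by omega
      have h2 : t ≤ 4 * P + 4 := by omega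
      have h3 := Nat.mul_le_mul_right (2 * (P + 2) * (P + 2)) h1
      have h4 := Nat.mul_le_mul_left (P + 2) h2
      nlinarith
  · constructor
    · intro H
      by_contra hn
      have h1 : 2 * P + 4 ≤ s := by omega
      have h3 := Nat.mul_le_mul_right (2 * (P + 2) * (P + 2)) h1
      nlinarith
    · intro H
      have h1 : s ≤ 2 * P + 3 := by omega
      have h2 : t ≤ 2 * P + 1 := by omega
      have h3 := Nat.mul_le_mul_right (2 * (P + 2) * (P + 2)) h1
      have h4 := Nat.mul_le_mul_left (P + 2) h2
      nlinarith

lemma suzuki_ite (Q c : ℕ) (hc : c < Q) :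
    ∑ d ∈ Finset.range Q, (if Q - 1 ≤ c + d then 1 else 0) = c + 1 := by
  rw [Finset.sum_boole]
  have : (Finset.range Q).filter (fun d => Q - 1 ≤ c + d) = Finset.Ico (Q - 1 - c) Q := by
    ext d
    simp only [Finset.mem_filter, Finset.mem_range, Finset.mem_Ico]
    omega
  rw [this, Nat.card_Ico]
  simp only [Nat.cast_id]
  omega

lemma suzuki_sum (Q : ℕ) (hQ : 2 ≤ Q) :
    ∑ p ∈ Finset.range 2 ×ˢ Finset.range Q ×ˢ Finset.range Q,
      (2 * Q - (p.1 + p.2.1 + p.2.2 + if Q - 1 ≤ p.2.1 + p.2.2 then 1 else 0))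
      = Q * (2 * Q * Q - 1) := by
  have h1 : ∑ p ∈ Finset.range 2 ×ˢ Finset.range Q ×ˢ Finset.range Q,
      (2 * Q - (p.1 + p.2.1 + p.2.2 + if Q - 1 ≤ p.2.1 + p.2.2 then 1 else 0))
      + ∑ p ∈ Finset.range 2 ×ˢ Finset.range Q ×ˢ Finset.range Q,
      (p.1 + p.2.1 + p.2.2 + if Q - 1 ≤ p.2.1 + p.2.2 then 1 else 0)
      = ∑ p ∈ Finset.range 2 ×ˢ Finset.range Q ×ˢ Finset.range Q, 2 * Q := by
    rw [← Finset.sum_add_distrib]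
    apply Finset.sum_congr rfl
    rintro ⟨b, c, d⟩ h
    simp only [Finset.mem_product, Finset.mem_range] at h
    dsimp only
    split_ifs <;> omega
  have h2 : ∑ p ∈ Finset.range 2 ×ˢ Finset.range Q ×ˢ Finset.range Q,
      (p.1 + p.2.1 + p.2.2 + if Q - 1 ≤ p.2.1 + p.2.2 then 1 else 0)
      = Q * Q + 4 * (Q * ∑ i ∈ Finset.range Q, i) + 2 * (∑ i ∈ Finset.range Q, i + Q) := by
    have h3 : ∑ c ∈ Finset.range Q, ∑ d ∈ Finset.range Q, (if Q - 1 ≤ c + d then 1 else 0)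
        = ∑ i ∈ Finset.range Q, i + Q := by
      rw [Finset.sum_congr rfl (fun c hc => suzuki_ite Q c (Finset.mem_range.1 hc)),
        Finset.sum_add_distrib]
      simp
    simp only [Finset.sum_product, Finset.sum_add_distrib, h3, Finset.sum_const, Finset.card_range,
      smul_eq_mul, Finset.card_product, Finset.sum_range_succ, Finset.sum_range_zero]
    rw [← Finset.mul_sum]
    ring
  have h4 := Finset.sum_range_id_mul_two Q
  rw [h2] at h1
  simp only [Finset.sum_const, Finset.card_product, Finset.card_range, smul_eq_mul] at h1
  generalize ∑ i ∈ Finset.range Q, i = T at *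
  obtain ⟨P, rfl⟩ : ∃ P, Q = P + 1 := ⟨Q - 1, by omega⟩
  have h5 : 2 * (P + 1) * (P + 1) - 1 = 2 * P * P + 4 * P + 1 := by
    have : 2 * (P + 1) * (P + 1) = 2 * P * P + 4 * P + 1 + 1 := by ring
    omega
  rw [h5]
  simp only [Nat.add_sub_cancel] at h4
  have h6 : 4 * ((P + 1) * T) = 2 * (P + 1) * ((P + 1) * P) := by rw [← h4]; ring
  rw [h6] at h1
  nlinarith

theorem suzuki_basis_count
    (m : ℕ) (hm : 1 ≤ m) (q0 q g : ℕ)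
    (hq0 : q0 = 2 ^ m) (hq : q = 2 ^ (2 * m + 1)) (hg : g = q0 * (q - 1)) :
    {x : ℕ × ℕ × ℕ × ℕ | x.2.1 ≤ 1 ∧ x.2.2.1 ≤ q0 - 1 ∧ x.2.2.2 ≤ q0 - 1 ∧
      x.1 * q + x.2.1 * (q + q0) + x.2.2.1 * (q + 2 * q0) + x.2.2.2 * (q + 2 * q0 + 1) ≤
        2 * g - 2}.ncard = g := by
  have hQ : 2 ≤ q0 := by
    rw [hq0]
    calc 2 = 2 ^ 1 := rfl
      _ ≤ 2 ^ m := Nat.pow_le_pow_right (by norm_num) hm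
  have hqq : q = 2 * q0 * q0 := by rw [hq, hq0]; ring
  clear hq hq0
  subst hqq
  subst hg
  let S : Finset (Σ _ : ℕ × ℕ × ℕ, ℕ) :=
    (Finset.range 2 ×ˢ Finset.range q0 ×ˢ Finset.range q0).sigma
      (fun p => Finset.range
        (2 * q0 - (p.1 + p.2.1 + p.2.2 + if q0 - 1 ≤ p.2.1 + p.2.2 then 1 else 0)))
  let f : (Σ _ : ℕ × ℕ × ℕ, ℕ) → ℕ × ℕ × ℕ × ℕ := fun x => (x.2, x.1)
  have hf : Function.Injective f := by
    rintro ⟨p, a⟩ ⟨p', a'⟩ h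
    simp only [f, Prod.mk.injEq] at h
    obtain ⟨rfl, rfl⟩ := h
    rfl
  have hS : {x : ℕ × ℕ × ℕ × ℕ | x.2.1 ≤ 1 ∧ x.2.2.1 ≤ q0 - 1 ∧ x.2.2.2 ≤ q0 - 1 ∧
      x.1 * (2 * q0 * q0) + x.2.1 * (2 * q0 * q0 + q0) + x.2.2.1 * (2 * q0 * q0 + 2 * q0)
        + x.2.2.2 * (2 * q0 * q0 + 2 * q0 + 1) ≤
        2 * (q0 * (2 * q0 * q0 - 1)) - 2} = f '' (S : Set (Σ _ : ℕ × ℕ × ℕ, ℕ)) := by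
    ext ⟨a, b, c, d⟩
    simp only [Set.mem_setOf_eq, Set.mem_image, Finset.mem_coe]
    constructor
    · rintro ⟨hb, hc, hd, h⟩
      refine ⟨⟨(b, c, d), a⟩, ?_, rfl⟩
      simp only [S, Finset.mem_sigma, Finset.mem_product, Finset.mem_range]
      exact ⟨⟨by omega, by omega, by omega⟩,
        (suzuki_key q0 a b c d hQ (by omega) (by omega) (by omega)).1 h⟩
    · rintro ⟨⟨⟨b', c', d'⟩, a'⟩, hx, he⟩
      simp only [f, Prod.mk.injEq] at he
      obtain ⟨rfl, rfl, rfl, rfl⟩ := he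
      simp only [S, Finset.mem_sigma, Finset.mem_product, Finset.mem_range] at hx
      obtain ⟨⟨hb, hc, hd⟩, h⟩ := hx
      exact ⟨by omega, by omega, by omega, (suzuki_key q0 _ _ _ _ hQ hb hc hd).2 h⟩
  rw [hS, Set.ncard_image_of_injective _ hf, Set.ncard_coe_finset, Finset.card_sigma]
  simp only [Finset.card_range]
  exact suzuki_sum q0 hQ
end

section
/- Let m be a positive integer, q0 = 2^m, q = 2^(2m+1), and g = q0·(q-1). Then the number of quadruples (a,b,c,d) of natural numbers with b ≤ 1, c ≤ q0 - 1, d ≤ q0 - 1, and a·q + b·(q+q0) + c·(q+2q0) + d·(q+2q0+1) ≤ g - 1 equals q0·(q0+1)·(2q0+1)/6. -/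
theorem suz_inner (k : ℕ) :
    ∑ d ∈ Finset.range k, ((k - d) + (k - d - 1)) = k ^ 2 := by
  induction k with
  | zero => simp
  | succ k ih =>
    rw [Finset.sum_range_succ']
    simp only [Nat.add_sub_add_right]
    rw [ih]
    simp only [Nat.sub_zero, Nat.add_sub_cancel]
    ring

theorem suz_outer (k : ℕ) :
    6 * ∑ c ∈ Finset.range k, (k - c) ^ 2 = k * (k + 1) * (2 * k + 1) := by
  induction k with
  | zero => simp
  | succ k ih =>
    rw [Finset.sum_range_succ']
    simp only [Nat.add_sub_add_right]
    rw [mul_add, ih]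
    simp only [Nat.sub_zero]
    ring

theorem suz_count_s3 (Q : ℕ) :
    {x : ℕ × ℕ × ℕ × ℕ | x.2.1 ≤ 1 ∧ x.1 + x.2.1 + x.2.2.1 + x.2.2.2 < Q}.ncard
      = ∑ c ∈ Finset.range Q, (Q - c) ^ 2 := by
  let T : Finset (Σ _ : ℕ, Σ _ : ℕ, Σ _ : ℕ, ℕ) :=
    (Finset.range Q).sigma fun c => (Finset.range (Q - c)).sigma fun d =>
      (Finset.range 2).sigma fun b => Finset.range (Q - c - d - b)
  let f : (Σ _ : ℕ, Σ _ : ℕ, Σ _ : ℕ, ℕ) → ℕ × ℕ × ℕ × ℕ :=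
    fun y => (y.2.2.2, y.2.2.1, y.1, y.2.1)
  have hf : Function.Injective f := by
    rintro ⟨c, d, b, a⟩ ⟨c', d', b', a'⟩ h
    simp only [f, Prod.mk.injEq] at h
    obtain ⟨rfl, rfl, rfl, rfl⟩ := h
    rfl
  have hS : {x : ℕ × ℕ × ℕ × ℕ | x.2.1 ≤ 1 ∧ x.1 + x.2.1 + x.2.2.1 + x.2.2.2 < Q}
      = f '' (T : Set _) := by
    ext ⟨a, b, c, d⟩
    simp only [Set.mem_ofPred_eq, Set.mem_image, Finset.mem_coe]
    constructor
    · rintro ⟨h1, h2⟩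
      refine ⟨⟨c, d, b, a⟩, ?_, rfl⟩
      simp only [T, Finset.mem_sigma, Finset.mem_range]
      omega
    · rintro ⟨⟨c', d', b', a'⟩, hy, h⟩
      simp only [T, Finset.mem_sigma, Finset.mem_range] at hy
      simp only [f, Prod.mk.injEq] at h
      omega
  rw [hS, Set.ncard_image_of_injective _ hf, Set.ncard_coe_finset]
  simp only [T, Finset.card_sigma, Finset.card_range]
  refine Finset.sum_congr rfl fun c _ => ?_
  rw [← suz_inner]
  refine Finset.sum_congr rfl fun d _ => ?_
  simp [Finset.sum_range_succ]

theorem suzuki_a_number_count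
    (m : ℕ) (hm : 1 ≤ m) (q0 q g : ℕ)
    (hq0 : q0 = 2 ^ m) (hq : q = 2 ^ (2 * m + 1)) (hg : g = q0 * (q - 1)) :
    {x : ℕ × ℕ × ℕ × ℕ | x.2.1 ≤ 1 ∧ x.2.2.1 ≤ q0 - 1 ∧ x.2.2.2 ≤ q0 - 1 ∧
      x.1 * q + x.2.1 * (q + q0) + x.2.2.1 * (q + 2 * q0) + x.2.2.2 * (q + 2 * q0 + 1) ≤
        g - 1}.ncard = q0 * (q0 + 1) * (2 * q0 + 1) / 6 := by
  have hqq : q = 2 * q0 ^ 2 := by rw [hq, hq0]; ring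
  have hpos : 1 ≤ q0 := by rw [hq0]; exact Nat.one_le_two_pow
  obtain ⟨n, rfl⟩ : ∃ n, q0 = n + 1 := ⟨q0 - 1, by omega⟩
  have hg1 : g - 1 = n * (q + 2 * (n + 1) + 1) := by
    have h1 : q - 1 = 2 * n ^ 2 + 4 * n + 1 := by
      have : q = 2 * n ^ 2 + 4 * n + 1 + 1 := by rw [hqq]; ring
      omega
    have : g = n * (q + 2 * (n + 1) + 1) + 1 := by rw [hg, h1, hqq]; ring
    omega
  have hg2 : g - 1 < (n + 1) * q := by
    rw [hg1, hqq]; nlinarith [sq_nonneg n]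
  rw [← suz_outer, Nat.mul_div_cancel_left _ (by norm_num), ← suz_count_s3]
  congr 1
  ext ⟨a, b, c, d⟩
  simp only [Set.mem_ofPred_eq]
  constructor
  · rintro ⟨h1, h2, h3, h4⟩
    refine ⟨h1, ?_⟩
    by_contra! h
    have : (n + 1) * q ≤ (a + b + c + d) * q := Nat.mul_le_mul_right _ h
    nlinarith [Nat.zero_le (b * (n + 1)), Nat.zero_le (c * (n + 1)), Nat.zero_le (d * (n + 1))]
  · rintro ⟨h1, h2⟩
    refine ⟨h1, by omega, by omega, ?_⟩
    rw [hg1]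
    calc _ ≤ a * (q + 2 * (n + 1) + 1) + b * (q + 2 * (n + 1) + 1) + c * (q + 2 * (n + 1) + 1)
          + d * (q + 2 * (n + 1) + 1) := by
            refine Nat.add_le_add (Nat.add_le_add (Nat.add_le_add ?_ ?_) ?_) ?_ <;>
              exact Nat.mul_le_mul_left _ (by omega)
      _ = (a + b + c + d) * (q + 2 * (n + 1) + 1) := by ring
      _ ≤ _ := Nat.mul_le_mul_right _ (by omega)
end

section
/- Let m be a positive integer, q0 = 2^m, q = 2^(2m+1), a = q0·(q0+1)·(2q0+1)/6, and g = q0·(q-1). Then, as rational numbers, 1/6 < a/g < 1/6 + 1/2^(m+1). -/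
theorem suzuki_a_number_ratio
    (m : ℕ) (hm : 1 ≤ m) (q0 q : ℕ)
    (hq0 : q0 = 2 ^ m) (hq : q = 2 ^ (2 * m + 1))
    (a g : ℚ)
    (ha : a = (q0 * (q0 + 1) * (2 * q0 + 1) : ℚ) / 6)
    (hg : g = (q0 : ℚ) * ((q : ℚ) - 1)) :
    1 / 6 < a / g ∧ a / g < 1 / 6 + 1 / 2 ^ (m + 1) := by
  have hx2 : (2 : ℚ) ≤ (q0 : ℚ) := by
    have h : 2 ^ 1 ≤ 2 ^ m := Nat.pow_le_pow_right (by norm_num) hm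
    have h' : 2 ≤ q0 := by rw [hq0]; simpa using h
    exact_mod_cast h'
  have hqx : (q : ℚ) = 2 * (q0 : ℚ) ^ 2 := by
    rw [hq, hq0]; push_cast; ring
  have hp : (2 : ℚ) ^ (m + 1) = 2 * (q0 : ℚ) := by
    rw [hq0]; push_cast; ring
  rw [hp, ha, hg, hqx]
  generalize (q0 : ℚ) = x at hx2
  have hx : 0 < x := by linarith
  have hd : 0 < 2 * x ^ 2 - 1 := by nlinarith
  have key : x * (x + 1) * (2 * x + 1) / 6 / (x * (2 * x ^ 2 - 1))
      = 1 / 6 + (3 * x + 2) / (6 * (2 * x ^ 2 - 1)) := by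
    obtain ⟨d, hdd⟩ : ∃ d, d = 2 * x ^ 2 - 1 := ⟨_, rfl⟩
    rw [← hdd] at hd ⊢
    have hd0 : d ≠ 0 := hd.ne'
    have hx0 : x ≠ 0 := hx.ne'
    field_simp
    rw [hdd]
    ring
  rw [key]
  constructor
  · have : 0 < (3 * x + 2) / (6 * (2 * x ^ 2 - 1)) := by positivity
    linarith
  · have : (3 * x + 2) / (6 * (2 * x ^ 2 - 1)) < 1 / (2 * x) := by
      rw [div_lt_div_iff₀ (by positivity) (by positivity)]
      nlinarith
    linarith
end

section
/- Let m be a positive integer, q0 = 2^m, q = 2^(2m+1). Let R be a commutative ring of characteristic 2 and let y, z ∈ R satisfy z^q + z = y^(q0+q) + y^(q0+1). Define h1 = z^(2q0) + y^(2q0+1) and h2 = z^(2q0)·y + h1^(2q0). Then z² = y·h1 + h2. -/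
theorem suzuki_relation_z_sq
    (m : ℕ) (hm : 1 ≤ m) (q0 q : ℕ)
    (hq0 : q0 = 2 ^ m) (hq : q = 2 ^ (2 * m + 1))
    (R : Type*) [CommRing R] [CharP R 2] (y z : R)
    (hyz : z ^ q + z = y ^ (q0 + q) + y ^ (q0 + 1))
    (h1 h2 : R)
    (hh1 : h1 = z ^ (2 * q0) + y ^ (2 * q0 + 1))
    (hh2 : h2 = z ^ (2 * q0) * y + h1 ^ (2 * q0)) :
    z ^ 2 = y * h1 + h2 := by
  have two : (2 : R) = 0 := CharTwo.two_eq_zero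
  have e : 2 * q0 = 2 ^ (m + 1) := by rw [hq0, pow_succ]; ring
  have hqq : 2 * q0 * (2 * q0) = q * 2 := by rw [hq0, hq]; ring
  have hA : h1 ^ (2 * q0) = z ^ (q * 2) + y ^ (q * 2) * y ^ (2 * q0) := by
    rw [hh1]
    conv_lhs => rw [e]
    rw [add_pow_char_pow, ← e, ← pow_mul, ← pow_mul, add_mul, hqq, one_mul, pow_add]
  have hS : z ^ (q * 2) + z ^ 2 = y ^ (q * 2) * y ^ (2 * q0) + y ^ (2 * q0) * y ^ 2 := by
    have h := congrArg (fun x => x ^ 2) hyz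
    simp only [CharTwo.add_sq] at h
    rw [← pow_mul, ← pow_mul, ← pow_mul] at h
    rw [h]; ring
  have h3 : h1 = z ^ (2 * q0) + y ^ (2 * q0) * y := by rw [hh1, pow_succ]
  rw [hh2, hA, h3]
  linear_combination hS + (y ^ (2 * q0) * (-y ^ 2) - z ^ (2 * q0) * y - z ^ (q * 2) + 0) * two + (y ^ (2 * q0) * y ^ 2 - y ^ (q * 2) * y ^ (2 * q0) + y ^ (q * 2) * y ^ (2 * q0)) * two
end

section
/- Let m be a positive integer, q0 = 2^m, q = 2^(2m+1). Let R be a commutative ring of characteristic 2 and let y, z ∈ R satisfy z^q + z = y^(q0+q) + y^(q0+1). Define h1 = z^(2q0) + y^(2q0+1). Then h1^(q0) = z + y^(q0+1). -/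
theorem suzuki_relation_h1
    (m : ℕ) (hm : 1 ≤ m) (q0 q : ℕ)
    (hq0 : q0 = 2 ^ m) (hq : q = 2 ^ (2 * m + 1))
    (R : Type*) [CommRing R] [CharP R 2] (y z : R)
    (hyz : z ^ q + z = y ^ (q0 + q) + y ^ (q0 + 1))
    (h1 : R)
    (hh1 : h1 = z ^ (2 * q0) + y ^ (2 * q0 + 1)) :
    h1 ^ q0 = z + y ^ (q0 + 1) := by
  have hqq : q = 2 * q0 * q0 := by
    rw [hq, hq0]; ring
  have e : h1 ^ q0 = z ^ q + y ^ (q0 + q) := by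
    have e2 : (2 * q0 + 1) * q0 = q0 + q := by rw [hqq]; ring
    have key : ∀ a b : R, (a + b) ^ q0 = a ^ q0 + b ^ q0 := by
      intro a b
      rw [hq0]
      exact add_pow_char_pow a b 2 m
    rw [hh1, key, ← pow_mul, ← pow_mul, ← hqq, e2]
  have h2 : (2 : R) = 0 := CharTwo.two_eq_zero
  rw [e]
  linear_combination hyz + (y ^ (q0 + q) - z) * h2
end

section
/- Let m be a positive integer, q0 = 2^m, q = 2^(2m+1). Let R be a commutative ring of characteristic 2 and let y, z ∈ R satisfy z^q + z = y^(q0+q) + y^(q0+1). Define h1 = z^(2q0) + y^(2q0+1) and h2 = z^(2q0)·y + h1^(2q0). Then h2^(q0) = h1 + z·y^(q0). -/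
theorem suzuki_relation_h2
    (m : ℕ) (hm : 1 ≤ m) (q0 q : ℕ)
    (hq0 : q0 = 2 ^ m) (hq : q = 2 ^ (2 * m + 1))
    (R : Type*) [CommRing R] [CharP R 2] (y z : R)
    (hyz : z ^ q + z = y ^ (q0 + q) + y ^ (q0 + 1))
    (h1 h2 : R)
    (hh1 : h1 = z ^ (2 * q0) + y ^ (2 * q0 + 1))
    (hh2 : h2 = z ^ (2 * q0) * y + h1 ^ (2 * q0)) :
    h2 ^ q0 = h1 + z * y ^ q0 := by
  have : Fact (Nat.Prime 2) := ⟨Nat.prime_two⟩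
  have two : (2 : R) = 0 := by exact_mod_cast CharP.cast_eq_zero R 2
  have f0 : ∀ a b : R, (a + b) ^ q0 = a ^ q0 + b ^ q0 := fun a b => by
    rw [hq0]; exact add_pow_char_pow a b 2 _
  have f2 : ∀ a b : R, (a + b) ^ (2 * q0) = a ^ (2 * q0) + b ^ (2 * q0) := fun a b => by
    rw [hq0, ← pow_succ']; exact add_pow_char_pow a b 2 _
  have fq : ∀ a b : R, (a + b) ^ q = a ^ q + b ^ q := fun a b => by
    rw [hq]; exact add_pow_char_pow a b 2 _
  have e : 2 * q0 * q0 = q := by rw [hq, hq0]; ring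
  have e' : q0 * (2 * q0) = q := by rw [← e]; ring
  have hz : z ^ q = z + y ^ q0 * (y ^ q + y) := by
    rw [pow_add, pow_succ] at hyz
    linear_combination hyz - z * two
  have hzz : (z ^ q) ^ (2 * q0) = z ^ (2 * q0) + y ^ q * ((y ^ q) ^ (2 * q0) + y ^ (2 * q0)) := by
    rw [hz, f2, mul_pow, f2, ← pow_mul y q0, e']
  have h1q : h1 ^ q = z ^ (2 * q0) + y ^ q * y ^ (2 * q0) := by
    have : h1 ^ q = (z ^ q) ^ (2 * q0) + (y ^ q) ^ (2 * q0) * y ^ q := by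
      rw [hh1, fq, pow_right_comm, pow_right_comm y, pow_succ]
    rw [this, hzz]
    linear_combination (y ^ q * (y ^ q) ^ (2 * q0)) * two
  have key : h2 ^ q0 = z ^ q * y ^ q0 + h1 ^ q := by
    rw [hh2, f0, mul_pow, ← pow_mul, ← pow_mul, e]
  have sq : y ^ (2 * q0) = y ^ q0 * y ^ q0 := by ring
  rw [key, h1q, hz, hh1, pow_succ, sq]
  linear_combination (y ^ q0 * y ^ q0 * y ^ q) * two
end

section
/- Let m be a positive integer, q0 = 2^m, q = 2^(2m+1), and let K be the finite field with q² elements. Then the set {y ∈ K : (y^(q0+q) + y^(q0+1))^q = y^(q0+q) + y^(q0+1)} equals the set {y ∈ K : y^q = y}; in particular it has exactly q elements. -/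
open Polynomial in
theorem suzuki_aux_card (n : ℕ) (hn : n ≠ 0) :
    {y : GaloisField 2 (2 * n) | y ^ 2 ^ n = y}.ncard = 2 ^ n := by
  classical
  have : Fact (Nat.Prime 2) := ⟨Nat.prime_two⟩
  have h2n : 2 * n ≠ 0 := by omega
  have hsp : Splits ((X ^ 2 ^ n - X : (ZMod 2)[X]).map
      (algebraMap (ZMod 2) (GaloisField 2 (2 * n)))) := by
    refine Splits.of_dvd (g := (X ^ 2 ^ (2 * n) - X : (ZMod 2)[X]).map
      (algebraMap (ZMod 2) (GaloisField 2 (2 * n)))) (SplittingField.splits _) ?_ ?_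
    · exact Polynomial.map_ne_zero
        (FiniteField.X_pow_card_pow_sub_X_ne_zero _ h2n (by norm_num))
    · exact Polynomial.map_dvd _ (dvd_pow_pow_sub_self_of_dvd (Dvd.intro_left 2 rfl))
  have key := card_rootSet_eq_natDegree
    (galois_poly_separable (K := ZMod 2) 2 (2 ^ n) (dvd_pow_self 2 hn)) hsp
  rw [FiniteField.X_pow_card_pow_sub_X_natDegree_eq _ hn (by norm_num)] at key
  rw [← Nat.card_eq_fintype_card, Nat.card_coe_set_eq] at key
  refine Eq.trans ?_ key
  congr 1
  ext y
  rw [mem_rootSet_of_ne (FiniteField.X_pow_card_pow_sub_X_ne_zero _ hn (by norm_num))]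
  simp [sub_eq_zero]

theorem suzuki_fiber_condition
    (m : ℕ) (hm : 1 ≤ m) (q0 q : ℕ)
    (hq0 : q0 = 2 ^ m) (hq : q = 2 ^ (2 * m + 1)) :
    {y : GaloisField 2 (2 * (2 * m + 1)) |
        (y ^ (q0 + q) + y ^ (q0 + 1)) ^ q = y ^ (q0 + q) + y ^ (q0 + 1)} =
      {y : GaloisField 2 (2 * (2 * m + 1)) | y ^ q = y} ∧
    {y : GaloisField 2 (2 * (2 * m + 1)) |
        (y ^ (q0 + q) + y ^ (q0 + 1)) ^ q = y ^ (q0 + q) + y ^ (q0 + 1)}.ncard = q := by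
  have hfact : Fact (Nat.Prime 2) := ⟨Nat.prime_two⟩
  have hset : {y : GaloisField 2 (2 * (2 * m + 1)) |
        (y ^ (q0 + q) + y ^ (q0 + 1)) ^ q = y ^ (q0 + q) + y ^ (q0 + 1)} =
      {y : GaloisField 2 (2 * (2 * m + 1)) | y ^ q = y} := by
    ext y
    simp only [Set.mem_ofPred_eq]
    have hcard : Nat.card (GaloisField 2 (2 * (2 * m + 1))) = q * q := by
      rw [GaloisField.card _ _ (by omega), hq]; ring
    have hyy : (y ^ q) ^ q = y := by
      have : Fintype (GaloisField 2 (2 * (2 * m + 1))) := Fintype.ofFinite _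
      rw [← pow_mul, ← hcard, Nat.card_eq_fintype_card, FiniteField.pow_card]
    have hadd (a b : GaloisField 2 (2 * (2 * m + 1))) : (a + b) ^ q = a ^ q + b ^ q := by
      rw [hq, add_pow_char_pow]
    have hadd0 (a b : GaloisField 2 (2 * (2 * m + 1))) : (a + b) ^ q0 = a ^ q0 + b ^ q0 := by
      rw [hq0, add_pow_char_pow]
    have hL : y ^ (q0 + q) + y ^ (q0 + 1) = y ^ q0 * (y ^ q + y) := by ring
    have hR : (y ^ q0 * (y ^ q + y)) ^ q = (y ^ q) ^ q0 * (y ^ q + y) := by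
      rw [mul_pow, hadd, hyy, ← pow_mul, ← pow_mul, mul_comm q0 q, add_comm y]
    rw [hL, hR, ← CharTwo.add_eq_zero, ← add_mul, ← hadd0, ← CharTwo.add_eq_zero (a := y ^ q)]
    rw [← pow_succ, pow_eq_zero_iff (by omega)]
  refine ⟨hset, ?_⟩
  rw [hset, hq]
  exact suzuki_aux_card (2 * m + 1) (by omega)
end

section
/- Let m be a positive integer, q0 = 2^m, q = 2^(2m+1), and let K be the finite field with q² elements. Then the number of pairs (y,z) ∈ K × K satisfying z^q + z = y^(q0+q) + y^(q0+1) equals q². -/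
theorem suzuki_fixed_card {K : Type*} [Field K] [CharP K 2] (n : ℕ) (hn : n ≠ 0)
    (hK : Nat.card K = (2 ^ n) ^ 2) :
    {x : K | x ^ 2 ^ n = x}.ncard = 2 ^ n := by
  classical
  have hpos : 0 < 2 ^ n := by positivity
  have : Finite K := Nat.finite_of_card_ne_zero (by rw [hK]; positivity)
  have := Fintype.ofFinite K
  have hfix : ∀ z : K, (z ^ 2 ^ n) ^ 2 ^ n = z := fun z => by
    rw [← pow_mul, ← sq, ← hK, Nat.card_eq_fintype_card, FiniteField.pow_card]
  let T : K →+ K := (iterateFrobenius K 2 n : K →+* K).toAddMonoidHom + AddMonoidHom.id K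
  have hT : ∀ z, T z = z ^ 2 ^ n + z := fun z => by
    simp [T, iterateFrobenius_def]
  have hker : ∀ z, z ∈ T.ker ↔ z ^ 2 ^ n = z := fun z => by
    rw [AddMonoidHom.mem_ker, hT, CharTwo.add_eq_zero]
  have hle : T.range ≤ T.ker := by
    rintro _ ⟨z, rfl⟩
    rw [hker, hT, add_pow_char_pow, hfix, add_comm]
  have hset : {x : K | x ^ 2 ^ n = x} = (T.ker : Set K) := by
    ext z; exact (hker z).symm
  have h1 : Nat.card T.ker * Nat.card T.range = (2 ^ n) ^ 2 := by
    rw [← hK, ← AddSubgroup.index_ker, AddSubgroup.card_mul_index]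
  have h2 : Nat.card T.range ≤ Nat.card T.ker := AddSubgroup.card_le_of_le hle
  have h3 : Nat.card T.ker ≤ 2 ^ n := by
    have hne : (Polynomial.X ^ 2 ^ n - Polynomial.X : Polynomial K) ≠ 0 :=
      FiniteField.X_pow_card_pow_sub_X_ne_zero K hn (by norm_num)
    have hd : (Polynomial.X ^ 2 ^ n - Polynomial.X : Polynomial K).natDegree = 2 ^ n :=
      FiniteField.X_pow_card_pow_sub_X_natDegree_eq K hn (by norm_num)
    have hs : (T.ker : Set K) ⊆
        ((Polynomial.X ^ 2 ^ n - Polynomial.X : Polynomial K).roots.toFinset : Set K) := by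
      intro z hz
      have := (hker z).1 hz
      simp [hne, this]
    have := Set.ncard_le_ncard hs (Finset.finite_toSet _)
    rw [Set.ncard_coe_finset] at this
    calc Nat.card T.ker = (T.ker : Set K).ncard := rfl
      _ ≤ _ := this
      _ ≤ _ := Multiset.toFinset_card_le _
      _ ≤ _ := Polynomial.card_roots' _
      _ = _ := hd
  rw [hset]
  change Nat.card T.ker = _
  nlinarith

theorem suzuki_set_eq {K : Type*} [Field K] [CharP K 2] (m n : ℕ)
    (hK : Nat.card K = (2 ^ n) ^ 2) :
    {p : K × K | p.2 ^ 2 ^ n + p.2 = p.1 ^ (2 ^ m + 2 ^ n) + p.1 ^ (2 ^ m + 1)} =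
      {x : K | x ^ 2 ^ n = x} ×ˢ {x : K | x ^ 2 ^ n = x} := by
  have : Finite K := Nat.finite_of_card_ne_zero (by rw [hK]; positivity)
  have := Fintype.ofFinite K
  have hfix : ∀ z : K, (z ^ 2 ^ n) ^ 2 ^ n = z := fun z => by
    rw [← pow_mul, ← sq, ← hK, Nat.card_eq_fintype_card, FiniteField.pow_card]
  have htr : ∀ z : K, (z ^ 2 ^ n + z) ^ 2 ^ n = z ^ 2 ^ n + z := fun z => by
    rw [add_pow_char_pow, hfix, add_comm]
  have hinj : ∀ a b : K, a ^ 2 ^ m = b ^ 2 ^ m → a = b := fun a b h =>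
    (iterateFrobenius K 2 m).injective (by simpa [iterateFrobenius_def] using h)
  ext ⟨y, z⟩
  simp only [Set.mem_setOf_eq, Set.mem_prod]
  have hf : y ^ (2 ^ m + 2 ^ n) + y ^ (2 ^ m + 1) = y ^ 2 ^ m * (y ^ 2 ^ n + y) := by ring
  rw [hf]
  constructor
  · intro h
    have hy : y ^ 2 ^ n = y := by
      by_contra hne
      have ht : y ^ 2 ^ n + y ≠ 0 := fun h0 => hne (CharTwo.add_eq_zero.1 h0)
      have h1 := htr z
      rw [h, mul_pow, htr y] at h1
      have h2 := mul_right_cancel₀ ht h1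
      rw [pow_right_comm] at h2
      exact hne (hinj _ _ h2)
    refine ⟨hy, ?_⟩
    rw [hy, CharTwo.add_self_eq_zero, mul_zero] at h
    exact CharTwo.add_eq_zero.1 h
  · rintro ⟨hy, hz⟩
    rw [hy, hz, CharTwo.add_self_eq_zero, CharTwo.add_self_eq_zero, mul_zero]

theorem suzuki_points_q_squared
    (m : ℕ) (hm : 1 ≤ m) (q0 q : ℕ)
    (hq0 : q0 = 2 ^ m) (hq : q = 2 ^ (2 * m + 1)) :
    {p : GaloisField 2 (2 * (2 * m + 1)) × GaloisField 2 (2 * (2 * m + 1)) |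
        p.2 ^ q + p.2 = p.1 ^ (q0 + q) + p.1 ^ (q0 + 1)}.ncard = q ^ 2 := by
  have hK : Nat.card (GaloisField 2 (2 * (2 * m + 1))) = (2 ^ (2 * m + 1)) ^ 2 := by
    rw [GaloisField.card _ _ (by omega), ← pow_mul, mul_comm]
  have hc := suzuki_fixed_card (K := GaloisField 2 (2 * (2 * m + 1))) (2 * m + 1) (by omega) hK
  subst hq0 hq
  rw [suzuki_set_eq m (2 * m + 1) hK, Set.ncard_prod, hc, sq]
end

section
/- Let m be a positive integer, q0 = 2^m, q = 2^(2m+1), g = q0·(q-1), and let L be the finite field with q⁴ elements. Then the number of pairs (y,z) ∈ L × L satisfying z^q + z = y^(q0+q) + y^(q0+1) equals q⁴ + 2·q²·g. -/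
set_option linter.unusedSectionVars false
set_option linter.style.haveILetI false

noncomputable def psi {K : Type*} [Field K] [Algebra (ZMod 2) K] (x : K) : ℤ :=
  if Algebra.trace (ZMod 2) K x = 0 then 1 else -1

section
variable {K : Type*} [Field K] [Fintype K] [Algebra (ZMod 2) K]

theorem two_zero : (2 : K) = 0 := by
  haveI : CharP K 2 := charP_of_injective_algebraMap (algebraMap (ZMod 2) K).injective 2
  exact CharTwo.two_eq_zero

theorem add_pow_two_pow (x y : K) (k : ℕ) : (x + y) ^ 2 ^ k = x ^ 2 ^ k + y ^ 2 ^ k := by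
  haveI : CharP K 2 := charP_of_injective_algebraMap (algebraMap (ZMod 2) K).injective 2
  exact add_pow_char_pow x y 2 k

theorem pow_two_pow_inj (k : ℕ) : Function.Injective (fun x : K => x ^ 2 ^ k) := by
  haveI : CharP K 2 := charP_of_injective_algebraMap (algebraMap (ZMod 2) K).injective 2
  exact iterateFrobenius_inj K 2 k

theorem pow_two_pow_bij (k : ℕ) : Function.Bijective (fun x : K => x ^ 2 ^ k) :=
  Finite.injective_iff_bijective.1 (pow_two_pow_inj k)

theorem psi_add (x y : K) : psi (x + y) = psi x * psi y := by
  unfold psi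
  rw [map_add]
  generalize Algebra.trace (ZMod 2) K x = a
  generalize Algebra.trace (ZMod 2) K y = b
  revert a b; decide

theorem psi_zero : psi (0 : K) = 1 := by simp [psi]

theorem psi_mul_self (x : K) : psi x * psi x = 1 := by
  unfold psi; split_ifs <;> norm_num

theorem psi_pow (x : K) (k : ℕ) : psi (x ^ 2 ^ k) = psi x := by
  have h2 : ∀ x : K, psi (x ^ 2) = psi x := by
    intro x
    unfold psi
    have := Algebra.trace_eq_of_algEquiv (FiniteField.frobeniusAlgEquivOfAlgebraic (ZMod 2) K) x
    simp at this
    rw [this]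
  induction k with
  | zero => simp
  | succ k ih => rw [pow_succ, pow_mul, h2, ih]

theorem sum_psi_mul [DecidableEq K] (c : K) :
    ∑ y : K, psi (c * y) = if c = 0 then (Fintype.card K : ℤ) else 0 := by
  split_ifs with hc
  · subst hc; simp [psi_zero]
  · obtain ⟨b, hb⟩ : ∃ b : K, psi (c * b) = -1 := by
      obtain ⟨b, hb⟩ := Algebra.trace_surjective (ZMod 2) K 1
      refine ⟨c⁻¹ * b, ?_⟩
      rw [mul_inv_cancel_left₀ hc]
      simp [psi, hb]
    have h : ∑ y : K, psi (c * y) = - ∑ y : K, psi (c * y) := by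
      conv_lhs => rw [← Equiv.sum_comp (Equiv.addRight b)]
      simp [mul_add, psi_add, hb]
    linarith

theorem iter_fix {x : K} {a : ℕ} (h : x ^ 2 ^ a = x) (j : ℕ) : x ^ 2 ^ (a * j) = x := by
  induction j with
  | zero => simp
  | succ j ih => rw [mul_add, pow_add, pow_mul, ih]; simpa using h

theorem exists_sub (N d : ℕ) (hN : 0 < N) (hd : d ∣ N) (hK : Fintype.card K = 2 ^ N) :
    ∃ E : IntermediateField (ZMod 2) K, (∀ x, x ∈ E ↔ x ^ 2 ^ d = x) ∧
      Module.finrank E K = N / d ∧ Nat.card E = 2 ^ d := by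
  set F := FiniteField.frobeniusAlgEquivOfAlgebraic (ZMod 2) K with hF
  have hfr : Module.finrank (ZMod 2) K = N := by
    have := Module.card_eq_pow_finrank (K := ZMod 2) (V := K)
    rw [hK, ZMod.card] at this
    exact (Nat.pow_right_injective le_rfl this).symm
  have hFp : ∀ k : ℕ, ∀ x, (F ^ k) x = x ^ 2 ^ k := by
    intro k
    induction k with
    | zero => simp
    | succ k ih => intro x; rw [pow_succ, AlgEquiv.mul_apply, ih]; simp [hF, pow_succ', pow_mul]
  have hord : orderOf F = N := by
    rw [← hfr]; exact FiniteField.orderOf_frobeniusAlgEquivOfAlgebraic (ZMod 2) K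
  have hd0 : d ≠ 0 := by rintro rfl; simp at hd; omega
  have hE : Module.finrank (IntermediateField.fixedField (Subgroup.zpowers (F ^ d))) K = N / d := by
    rw [IntermediateField.finrank_fixedField_eq_card, Nat.card_zpowers, orderOf_pow, hord,
      Nat.gcd_eq_right hd]
  refine ⟨IntermediateField.fixedField (Subgroup.zpowers (F ^ d)), ?_, hE, ?_⟩
  · intro x
    rw [IntermediateField.mem_fixedField_iff]
    constructor
    · intro h
      rw [← hFp]; exact h _ (Subgroup.mem_zpowers _)
    · intro h g hg
      rw [← mem_powers_iff_mem_zpowers] at hg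
      obtain ⟨j, rfl⟩ := hg
      simp only [← pow_mul, hFp]
      exact iter_fix h j
  · have := Module.natCard_eq_pow_finrank
      (K := IntermediateField.fixedField (Subgroup.zpowers (F ^ d))) (V := K)
    rw [hE, Nat.card_eq_fintype_card (α := K), hK] at this
    obtain ⟨e, rfl⟩ := hd
    have he : e ≠ 0 := by rintro rfl; simp at hN
    rw [Nat.mul_div_cancel_left e (by omega), pow_mul] at this
    exact (Nat.pow_left_injective he this).symm

theorem psi_eq_one_of_fix (n : ℕ) (hn : 0 < n) (hK : Fintype.card K = 2 ^ (4 * n)) (x : K)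
    (hx : x ^ 2 ^ (2 * n) = x) : psi x = 1 := by
  have hfr : Module.finrank (ZMod 2) K = 2 * n + 2 * n := by
    have := Module.card_eq_pow_finrank (K := ZMod 2) (V := K)
    rw [hK, ZMod.card] at this
    have := (Nat.pow_right_injective le_rfl this).symm
    omega
  have h := FiniteField.algebraMap_trace_eq_sum_pow (ZMod 2) K x
  rw [hfr, Finset.sum_range_add] at h
  simp only [Nat.card_zmod, pow_add, pow_mul _ (2 ^ (2 * n)), hx] at h
  rw [← two_mul, two_zero, zero_mul] at h
  unfold psi
  rw [if_pos ((map_eq_zero _).1 h)]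

theorem card_pow_eq (x : K) (N : ℕ) (hK : Fintype.card K = 2 ^ N) : x ^ 2 ^ N = x := by
  rw [← hK]; exact FiniteField.pow_card x

theorem fix_iff (n t a : ℕ) (hK : Fintype.card K = 2 ^ (4 * n)) (ht : Odd t) (ha : 0 < a) (x : K) :
    x ^ 2 ^ (a * n * t) = x ↔ x ^ 2 ^ (a * n) = x := by
  constructor
  · intro h
    have h1 := iter_fix h t
    obtain ⟨j, rfl⟩ := ht
    have e : a * n * (2 * j + 1) * (2 * j + 1) = 4 * n * (a * (j * j + j)) + a * n := by ring
    rw [e, pow_add, pow_mul, iter_fix (card_pow_eq x _ hK)] at h1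
    exact h1
  · intro h
    exact iter_fix h t

theorem exists_omega (n : ℕ) (hn : 0 < n) (hK : Fintype.card K = 2 ^ (4 * n)) :
    ∃ w : K, w ^ 2 = w + 1 := by
  classical
  obtain ⟨E, hE, -, hc⟩ := exists_sub (K := K) (4 * n) 2 (by omega) ⟨2 * n, by ring⟩ hK
  by_contra! hcon
  have hsub : (E : Set K) ⊆ (({0, 1} : Finset K) : Set K) := by
    intro x hx
    have hx' := (hE x).1 hx
    have h2 := two_zero (K := K)
    have : x * (x - 1) * (x ^ 2 + x + 1) = 0 := by linear_combination hx'
    have h3 : x ^ 2 + x + 1 ≠ 0 := fun h => hcon x (by linear_combination h - (x + 1) * h2)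
    have := (mul_eq_zero.1 this).resolve_right h3
    rcases mul_eq_zero.1 this with h | h
    · simp [h]
    · simp [sub_eq_zero.1 h]
  have h1 := Set.ncard_le_ncard hsub (Finset.finite_toSet _)
  rw [Set.ncard_coe_finset] at h1
  have h2 : (E : Set K).ncard = 4 := hc
  have h3 := Finset.card_le_two (a := (0 : K)) (b := 1)
  omega

noncomputable def ff (m : ℕ) (y : K) : K := y ^ 2 ^ m * (y ^ 2 ^ (2 * m + 1) + y)

noncomputable def cc (m : ℕ) (x : K) : K :=
  (x ^ 2 ^ (2 * m + 1) + x) ^ 2 ^ m + ((x ^ 2 ^ (2 * m + 1) + x) ^ 2 ^ m) ^ 2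

theorem cc_zero_iff (m : ℕ) (x : K) :
    cc m x = 0 ↔ (x ^ 2 ^ (2 * m + 1) = x ∨ x ^ 2 ^ (2 * m + 1) = x + 1) := by
  have h2 := two_zero (K := K)
  unfold cc
  generalize hX : x ^ 2 ^ (2 * m + 1) = X
  have h1 : (X + x) ^ 2 ^ m + ((X + x) ^ 2 ^ m) ^ 2 = 0 ↔
      ((X + x) ^ 2 ^ m = 0 ∨ (X + x) ^ 2 ^ m = 1) := by
    generalize (X + x) ^ 2 ^ m = u
    constructor
    · intro h
      have : u * (u - 1) = 0 := by linear_combination h - u * h2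
      rcases mul_eq_zero.1 this with h | h
      · exact Or.inl h
      · exact Or.inr (sub_eq_zero.1 h)
    · rintro (rfl | rfl)
      · simp
      · linear_combination h2
  rw [h1]
  apply or_congr
  · constructor
    · intro h
      have := pow_eq_zero_iff (by positivity) |>.1 h
      linear_combination this - x * h2
    · rintro rfl
      rw [show X + X = 0 by linear_combination X * h2]
      simp
  · constructor
    · intro h
      have : X + x = 1 := pow_two_pow_inj m (by simpa using h)
      linear_combination this - x * h2
    · rintro rfl
      rw [show x + 1 + x = 1 by linear_combination x * h2]
      simp

theorem psi_polar (m : ℕ) (x y : K) :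
    psi (ff m (x + y)) * psi (ff m y) = psi (ff m x) * psi (cc m x * y ^ 2 ^ (2 * m + 1)) := by
  have e1 : ff m (x + y) = ff m x + (x ^ 2 ^ m * y ^ 2 ^ (2 * m + 1) + x ^ 2 ^ m * y
      + y ^ 2 ^ m * x ^ 2 ^ (2 * m + 1) + y ^ 2 ^ m * x) + ff m y := by
    unfold ff
    simp only [add_pow_two_pow]
    ring
  have e2 : cc m x * y ^ 2 ^ (2 * m + 1) = x ^ 2 ^ m * y ^ 2 ^ (2 * m + 1)
      + (x ^ 2 ^ m * y) ^ 2 ^ (2 * m + 1)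
      + (y ^ 2 ^ m * x ^ 2 ^ (2 * m + 1)) ^ 2 ^ (m + 1) + (y ^ 2 ^ m * x) ^ 2 ^ (m + 1) := by
    have h2 := two_zero (K := K)
    unfold cc
    rw [add_pow_two_pow]
    simp only [mul_pow, ← pow_mul, ← pow_add]
    rw [show m + (m + 1) = 2 * m + 1 by ring,
      show 2 * m + 1 + (m + 1) = (2 * m + 1 + m) + 1 by ring, pow_succ 2 (2 * m + 1 + m),
      pow_succ 2 m, pow_mul x, pow_mul x, add_comm m (2 * m + 1)]
    linear_combination x ^ 2 ^ m * x ^ 2 ^ (2 * m + 1 + m) * y ^ 2 ^ (2 * m + 1) * h2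
  rw [e1, e2]
  simp only [psi_add, psi_pow]
  rw [mul_assoc, psi_mul_self, mul_one]

noncomputable def SS (m : ℕ) (K : Type*) [Field K] [Fintype K] [Algebra (ZMod 2) K] : ℤ :=
  ∑ y : K, psi (ff m y)

theorem sum_psi_mul_pow [DecidableEq K] (c : K) (k : ℕ) :
    ∑ y : K, psi (c * y ^ 2 ^ k) = if c = 0 then (Fintype.card K : ℤ) else 0 := by
  rw [← sum_psi_mul c]
  exact Function.Bijective.sum_comp (pow_two_pow_bij k) (fun y => psi (c * y))

theorem SS_sq_aux [DecidableEq K] (m : ℕ) :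
    SS m K * SS m K = ∑ x : K, if cc m x = 0 then psi (ff m x) * (Fintype.card K : ℤ) else 0 := by
  unfold SS
  rw [Finset.sum_mul_sum, Finset.sum_comm]
  have : ∀ y : K, ∑ x : K, psi (ff m x) * psi (ff m y)
      = ∑ x : K, psi (ff m x) * psi (cc m x * y ^ 2 ^ (2 * m + 1)) := by
    intro y
    rw [← Equiv.sum_comp (Equiv.addRight y)]
    exact Finset.sum_congr rfl fun x _ => psi_polar m x y
  rw [Finset.sum_congr rfl fun y _ => this y, Finset.sum_comm]
  refine Finset.sum_congr rfl fun x _ => ?_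
  rw [← Finset.mul_sum, sum_psi_mul_pow]
  simp

theorem card_fix [DecidableEq K] (n t : ℕ) (hn : 0 < n) (ht : Odd t)
    (hK : Fintype.card K = 2 ^ (4 * n)) :
    (Finset.univ.filter fun x : K => x ^ 2 ^ (n * t) = x).card = 2 ^ n := by
  obtain ⟨E, hE, -, hc⟩ := exists_sub (K := K) (4 * n) n (by omega) ⟨4, by ring⟩ hK
  rw [← hc]
  have h1 : Nat.card E = (E : Set K).ncard := rfl
  rw [h1, ← Set.ncard_coe_finset]
  congr 1
  ext x
  have := fix_iff n t 1 hK ht one_pos x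
  rw [one_mul] at this
  simp [this, hE]

theorem SS_sq (m n t : ℕ) (hn : 0 < n) (hK : Fintype.card K = 2 ^ (4 * n))
    (hs : 2 * m + 1 = n * t) : SS m K * SS m K = 2 ^ (5 * n + 1) := by
  classical
  have ht : Odd t := by
    have : Odd (n * t) := hs ▸ ⟨m, rfl⟩
    exact (Nat.odd_mul.1 this).2
  have h2 := two_zero (K := K)
  have hpsi : ∀ x : K, cc m x = 0 → psi (ff m x) = 1 := by
    intro x hx
    unfold ff
    rcases (cc_zero_iff m x).1 hx with h | h
    · rw [h, show x + x = 0 by linear_combination x * h2, mul_zero, psi_zero]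
    · rw [h, show x + 1 + x = 1 by linear_combination x * h2, mul_one, psi_pow]
      apply psi_eq_one_of_fix n hn hK
      have := fix_iff n t 2 hK ht two_pos x
      rw [← this, show 2 * n * t = (2 * m + 1) + (2 * m + 1) by rw [hs]; ring, pow_add, pow_mul, h,
        add_pow_two_pow, h]
      simp
      linear_combination h2
  obtain ⟨w, hw⟩ := exists_omega (K := K) n hn hK
  have hwq : w ^ 2 ^ (2 * m + 1) = w + 1 := by
    have h4 : w ^ 2 ^ 2 = w := by linear_combination (w ^ 2 + w + 2) * hw + (w + 1) * h2
    rw [pow_succ, pow_mul, iter_fix h4, hw]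
  have hcard : (Finset.univ.filter fun x : K => cc m x = 0).card = 2 * 2 ^ n := by
    have e : (Finset.univ.filter fun x : K => cc m x = 0) =
        (Finset.univ.filter fun x : K => x ^ 2 ^ (2 * m + 1) = x) ∪
        (Finset.univ.filter fun x : K => x ^ 2 ^ (2 * m + 1) = x + 1) := by
      ext x; simp [cc_zero_iff]
    rw [e, Finset.card_union_of_disjoint]
    · have e2 : (Finset.univ.filter fun x : K => x ^ 2 ^ (2 * m + 1) = x + 1) =
        (Finset.univ.filter fun x : K => x ^ 2 ^ (2 * m + 1) = x).image (· + w) := by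
        ext x
        simp only [Finset.mem_filter, Finset.mem_univ, true_and, Finset.mem_image]
        constructor
        · intro h
          refine ⟨x + w, ?_, by linear_combination w * h2⟩
          rw [add_pow_two_pow, h, hwq]; linear_combination h2
        · rintro ⟨y, hy, rfl⟩
          rw [add_pow_two_pow, hy, hwq]; ring
      rw [e2, Finset.card_image_of_injective _ (add_left_injective w), hs, card_fix n t hn ht hK]
      ring
    · rw [Finset.disjoint_filter]
      intro x _ h h'
      rw [h] at h'
      simp at h'
  rw [SS_sq_aux, ← Finset.sum_filter, Finset.sum_congr rfl (g := fun _ => (Fintype.card K : ℤ))]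
  · rw [Finset.sum_const, hcard, hK]
    simp
    ring
  · intro x hx
    rw [hpsi x (by simpa using hx), one_mul]

theorem card_filter_modEq {α : Type*} [Fintype α] [DecidableEq α] (p : ℕ) [Fact p.Prime]
    (f : α → α) (hf : ∀ x, f^[p] x = x) (P : α → Prop) [DecidablePred P]
    (hP : ∀ x, P x → P (f x)) :
    (Finset.univ.filter P).card ≡ (Finset.univ.filter fun x => f x = x ∧ P x).card [MOD p] := by
  let g : Function.End {x // P x} := fun x => ⟨f x.1, hP _ x.2⟩
  have hg : ∀ (k : ℕ) (x : {x // P x}), ((g ^ k) x).1 = f^[k] x.1 := by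
    intro k
    induction k with
    | zero => intro x; rfl
    | succ k ih =>
      intro x
      rw [pow_succ, Function.iterate_succ_apply]
      exact ih (g x)
  have h1 : g ^ p ^ 1 = 1 := by
    funext x
    apply Subtype.ext
    rw [pow_one, hg, hf]; rfl
  have := Equiv.Perm.card_fixedPoints_modEq h1
  rw [Fintype.card_subtype] at this
  refine this.trans ?_
  refine congrArg (· % p) ?_
  rw [Fintype.card_eq_nat_card, ← Set.ncard_coe_finset]
  refine Nat.card_congr ⟨fun x => ⟨x.1.1, ?_⟩, fun x => ⟨⟨x.1, ?_⟩, ?_⟩, ?_, ?_⟩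
  · have := x.2
    have h : g x.1 = x.1 := this
    have h' : f x.1.1 = x.1.1 := congrArg Subtype.val h
    simp [h', x.1.2]
  · have := x.2
    simp at this
    exact this.2
  · have := x.2
    simp at this
    exact Subtype.ext this.1
  · intro x; rfl
  · intro x; rfl

theorem ff_pow (m k : ℕ) (y : K) : ff m (y ^ 2 ^ k) = (ff m y) ^ 2 ^ k := by
  unfold ff
  rw [mul_pow, add_pow_two_pow]
  simp only [← pow_mul, mul_comm]

theorem psi_cases (x : K) : psi x = 1 ∨ psi x = -1 := by
  unfold psi; split_ifs <;> simp

theorem psi_coe (E : IntermediateField (ZMod 2) K) (hE : Odd (Module.finrank E K)) (e : E) :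
    psi (e : K) = psi e := by
  unfold psi
  have h : Algebra.trace (ZMod 2) K (e : K) = Algebra.trace (ZMod 2) E e := by
    rw [← Algebra.trace_trace (S := E)]
    have := Algebra.trace_algebraMap (R := E) (S := K) e
    rw [show algebraMap E K e = (e : K) from rfl] at this
    rw [this, map_nsmul]
    obtain ⟨r, hr⟩ := hE
    rw [hr, add_smul, mul_smul]
    have h0 : ∀ a b : ZMod 2, 2 • a + b = b := by decide
    rw [one_smul, h0]
  rw [h]

theorem SS_modEq (m p n : ℕ) [hp : Fact p.Prime] (hp2 : Odd p) (hn : 0 < n)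
    (hK : Fintype.card K = 2 ^ (4 * (n * p))) :
    ∃ E : IntermediateField (ZMod 2) K, Nat.card E = 2 ^ (4 * n) ∧
      ∀ [Fintype E], SS m K ≡ SS m E [ZMOD p] := by
  classical
  have hp0 := hp.out.pos
  obtain ⟨E, hE, hfr, hc⟩ := exists_sub (K := K) (4 * (n * p)) (4 * n) (by positivity)
    ⟨p, by ring⟩ hK
  rw [← mul_assoc, Nat.mul_div_cancel_left _ (by omega)] at hfr
  refine ⟨E, hc, ?_⟩
  intro _
  let f : K → K := fun x => x ^ 2 ^ (4 * n)
  have hf : ∀ x, f^[p] x = x := by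
    intro x
    have : ∀ k, f^[k] x = x ^ 2 ^ (4 * n * k) := by
      intro k
      induction k with
      | zero => simp
      | succ k ih =>
        rw [Function.iterate_succ_apply', ih]
        simp only [f]
        rw [← pow_mul, ← pow_add]; rfl
    rw [this, mul_assoc]
    exact card_pow_eq x _ hK
  have hinv : ∀ x, psi (ff m (f x)) = psi (ff m x) := by
    intro x
    simp only [f]
    rw [ff_pow, psi_pow]
  have h1 := card_filter_modEq p f hf (fun x => psi (ff m x) = 1) (fun x hx => by rw [hinv, hx])
  have h2 := card_filter_modEq p f hf (fun x => psi (ff m x) = -1) (fun x hx => by rw [hinv, hx])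
  have e1 : SS m K = ((Finset.univ.filter fun x : K => psi (ff m x) = 1).card : ℤ)
      - ((Finset.univ.filter fun x : K => psi (ff m x) = -1).card : ℤ) := by
    unfold SS
    rw [Finset.card_filter, Finset.card_filter]
    push_cast
    rw [← Finset.sum_sub_distrib]
    refine Finset.sum_congr rfl fun x _ => ?_
    rcases psi_cases (ff m x) with h | h <;> rw [h] <;> norm_num
  have e2 : SS m E = ((Finset.univ.filter fun x : K => f x = x ∧ psi (ff m x) = 1).card : ℤ)
      - ((Finset.univ.filter fun x : K => f x = x ∧ psi (ff m x) = -1).card : ℤ) := by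
    have : SS m E = ∑ x ∈ Finset.univ.filter (fun x : K => f x = x), psi (ff m x) := by
      unfold SS
      rw [Finset.sum_subtype (p := fun x => x ∈ E) _ (by intro x; simp [hE, f])]
      refine Finset.sum_congr rfl fun x _ => ?_
      rw [← psi_coe E (by rw [hfr]; exact hp2)]
      rfl
    rw [this, Finset.sum_filter, Finset.card_filter, Finset.card_filter]
    push_cast
    rw [← Finset.sum_sub_distrib]
    refine Finset.sum_congr rfl fun x _ => ?_
    by_cases hx : f x = x
    · rcases psi_cases (ff m x) with h | h <;> simp [hx, h]
    · simp [hx]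
  rw [e1, e2]
  exact Int.ModEq.sub ((Int.natCast_modEq_iff).2 h1) ((Int.natCast_modEq_iff).2 h2)

theorem psi_sixteen (hK : Fintype.card K = 2 ^ (4 * 1)) (z : K)
    (hz : z + z ^ 2 + z ^ 4 + z ^ 8 = 1) : psi z = -1 := by
  have hfr : Module.finrank (ZMod 2) K = 4 := by
    have := Module.card_eq_pow_finrank (K := ZMod 2) (V := K)
    rw [hK, ZMod.card] at this
    exact (Nat.pow_right_injective le_rfl this).symm
  have h := FiniteField.algebraMap_trace_eq_sum_pow (ZMod 2) K z
  rw [hfr] at h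
  simp [Finset.sum_range_succ] at h
  unfold psi
  rw [if_neg]
  intro h0
  rw [h0, map_zero, hz] at h
  simp at h

theorem psi_sixteen_zero (hK : Fintype.card K = 2 ^ (4 * 1)) (z : K)
    (hz : z + z ^ 2 + z ^ 4 + z ^ 8 = 0) : psi z = 1 := by
  have hfr : Module.finrank (ZMod 2) K = 4 := by
    have := Module.card_eq_pow_finrank (K := ZMod 2) (V := K)
    rw [hK, ZMod.card] at this
    exact (Nat.pow_right_injective le_rfl this).symm
  have h := FiniteField.algebraMap_trace_eq_sum_pow (ZMod 2) K z
  rw [hfr] at h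
  simp [Finset.sum_range_succ] at h
  unfold psi
  rw [hz] at h
  rw [if_pos ((map_eq_zero _).1 h)]

theorem base_case (hK : Fintype.card K = 2 ^ (4 * 1)) (m : ℕ) :
    SS m K = ZMod.χ₈ ((2 * m + 1 : ℕ) : ZMod 8) * 8 := by
  classical
  haveI : CharP K 2 := charP_of_injective_algebraMap (algebraMap (ZMod 2) K).injective 2
  have h2 := two_zero (K := K)
  have hsq := SS_sq (K := K) m 1 (2 * m + 1) one_pos hK (by ring)
  have hS : SS m K = 8 ∨ SS m K = -8 := by
    have : (SS m K - 8) * (SS m K + 8) = 0 := by linear_combination hsq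
    rcases mul_eq_zero.1 this with h | h
    · left; linarith
    · right; linarith
  obtain ⟨E, hE, -, hc⟩ := exists_sub (K := K) (4 * 1) 2 (by omega) ⟨2, by ring⟩ hK
  have hc4 : (Finset.univ.filter fun x : K => x ^ 4 = x).card = 4 := by
    have h1 : Nat.card E = (E : Set K).ncard := rfl
    rw [← Set.ncard_coe_finset]
    refine Eq.trans ?_ (h1.symm.trans hc)
    congr 1
    ext x
    simp [hE]
  have h16 : ∀ x : K, x ^ 16 = x := fun x => card_pow_eq x _ hK
  obtain ⟨y, hy⟩ : ∃ y : K, y ^ 4 = y + 1 := by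
    obtain ⟨v, hv⟩ : ∃ v : K, v ^ 4 ≠ v := by
      by_contra! hcon
      rw [Finset.filter_true_of_mem (fun x _ => hcon x), Finset.card_univ, hK] at hc4
      norm_num at hc4
    have hd : v ^ 4 + v ≠ 0 := fun h => hv (by linear_combination h - v * h2)
    have hd4 : (v ^ 4 + v) ^ 4 = v ^ 4 + v := by
      have := add_pow_two_pow (v ^ 4) v 2
      have e := h16 v
      norm_num at this
      rw [this, ← pow_mul, e]; ring
    refine ⟨v / (v ^ 4 + v), ?_⟩
    rw [div_pow, hd4, eq_comm, div_add_one hd]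
    congr 1
    linear_combination v * h2
  have hc4' : (Finset.univ.filter fun x : K => x ^ 4 = x + 1).card = 4 := by
    refine Eq.trans ?_ ((Finset.card_image_of_injective
      (Finset.univ.filter fun x : K => x ^ 4 = x) (add_left_injective y)).trans hc4)
    congr 1
    ext x
    have key := fun a b : K => add_pow_two_pow a b 2
    norm_num at key
    simp only [Finset.mem_filter, Finset.mem_univ, true_and, Finset.mem_image]
    constructor
    · intro h
      refine ⟨x + y, ?_, by linear_combination y * h2⟩
      rw [key, h, hy]; linear_combination h2
    · rintro ⟨z, hz, rfl⟩
      rw [key, hz, hy]; ring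
  have hne : ∀ y : K, y ^ 4 = y + 1 → y ^ 4 ≠ y := by
    intro y h h'
    rw [h] at h'; simp at h'
  have hj : ∀ (x : K) (j r : ℕ), x ^ 2 ^ (4 * j + r) = x ^ 2 ^ r := by
    intro x j r
    rw [pow_add, pow_mul, iter_fix (card_pow_eq x 4 hK)]
  -- positive and negative criteria
  have hpos : psi (ff m (y ^ 3)) = 1 → SS m K = 8 := by
    intro hy3
    refine hS.resolve_right fun hneg => ?_
    have hA : ∀ x ∈ insert (y ^ 3) (Finset.univ.filter fun x : K => x ^ 4 = x),
        psi (ff m x) + 1 = 2 := by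
      intro x hx
      rcases Finset.mem_insert.1 hx with rfl | hx
      · rw [hy3]; rfl
      · have hx4 : x ^ 4 = x := by simpa using hx
        rw [psi_eq_one_of_fix 1 one_pos hK]
        · rfl
        · rw [← ff_pow]; norm_num [hx4]
    have hle := Finset.sum_le_sum_of_subset_of_nonneg (f := fun x : K => psi (ff m x) + 1)
      (Finset.subset_univ (insert (y ^ 3) (Finset.univ.filter fun x : K => x ^ 4 = x)))
      (fun x _ _ => by rcases psi_cases (ff m x) with h | h <;> rw [h] <;> norm_num)
    rw [Finset.sum_congr rfl hA, Finset.sum_const, Finset.card_insert_of_notMem, hc4,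
      Finset.sum_add_distrib, Finset.sum_const, Finset.card_univ, hK] at hle
    · change _ ≤ SS m K + _ at hle
      rw [hneg] at hle
      norm_num at hle
    · simp only [Finset.mem_filter, Finset.mem_univ, true_and]
      intro h
      have h1 : y ^ 2 + y + 1 = 0 := by grind
      exact hne y hy (by grind)
  have hneg : (∀ y : K, y ^ 4 = y + 1 → psi (ff m y) = -1) → psi (ff m (y ^ 3)) = -1 →
      SS m K = -8 := by
    intro hroot hy3
    refine hS.resolve_left fun hneg => ?_
    have hA : ∀ x ∈ insert (y ^ 3) (Finset.univ.filter fun x : K => x ^ 4 = x + 1),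
        1 - psi (ff m x) = 2 := by
      intro x hx
      rcases Finset.mem_insert.1 hx with rfl | hx
      · rw [hy3]; rfl
      · rw [hroot x (by simpa using hx)]; rfl
    have hle := Finset.sum_le_sum_of_subset_of_nonneg (f := fun x : K => 1 - psi (ff m x))
      (Finset.subset_univ (insert (y ^ 3) (Finset.univ.filter fun x : K => x ^ 4 = x + 1)))
      (fun x _ _ => by rcases psi_cases (ff m x) with h | h <;> rw [h] <;> norm_num)
    rw [Finset.sum_congr rfl hA, Finset.sum_const, Finset.card_insert_of_notMem, hc4',
      Finset.sum_sub_distrib, Finset.sum_const, Finset.card_univ, hK] at hle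
    · change _ ≤ _ - SS m K at hle
      rw [hneg] at hle
      norm_num at hle
    · simp only [Finset.mem_filter, Finset.mem_univ, true_and]
      intro h
      have h1 : y ^ 2 + y = 0 := by grind
      exact hne y hy (by grind)
  obtain ⟨j, r, hr, rfl⟩ : ∃ j r, r < 4 ∧ m = 4 * j + r :=
    ⟨m / 4, m % 4, Nat.mod_lt _ (by norm_num), (Nat.div_add_mod m 4).symm⟩
  have hff : ∀ x : K, ff (4 * j + r) x = x ^ 2 ^ r * (x ^ 2 ^ (2 * r + 1) + x) := by
    intro x
    unfold ff
    rw [hj, show 2 * (4 * j + r) + 1 = 4 * (2 * j) + (2 * r + 1) by ring, hj]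
  have hchi : ((2 * (4 * j + r) + 1 : ℕ) : ZMod 8) = ((2 * r + 1 : ℕ) : ZMod 8) := by
    rw [show 2 * (4 * j + r) + 1 = 8 * j + (2 * r + 1) by ring, Nat.cast_add, Nat.cast_mul]
    rw [show ((8 : ℕ) : ZMod 8) = 0 from rfl, zero_mul, zero_add]
  rw [hchi]
  -- the conjugates
  have hconj : ∀ y : K, y ^ 4 = y + 1 → y ^ 8 = y ^ 2 + 1 := by intro y hy; grind
  have h3 : ∀ y : K, y ^ 4 = y + 1 → (y ^ 3) ^ 2 = y ^ 3 + y ^ 2 ∧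
      (y ^ 3) ^ 4 = y ^ 3 + y ^ 2 + y + 1 ∧ (y ^ 3) ^ 8 = y ^ 3 + y := by
    intro y hy
    refine ⟨by grind, by grind, by grind⟩
  have t1 : psi (1 : K) = 1 := psi_eq_one_of_fix 1 one_pos hK _ (by simp)
  have tw : ∀ y : K, y ^ 4 = y + 1 → psi (y ^ 2 + y) = 1 := by
    intro y hy
    apply psi_eq_one_of_fix 1 one_pos hK
    norm_num
    grind
  have t3 : ∀ y : K, y ^ 4 = y + 1 → psi (y ^ 3) = -1 := by
    intro y hy
    apply psi_sixteen hK
    obtain ⟨a, b, c⟩ := h3 y hy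
    rw [a, b, c]
    linear_combination (2 * y ^ 3 + y ^ 2 + y) * h2
  have ty : ∀ y : K, y ^ 4 = y + 1 → psi y = 1 := by
    intro y hy
    apply psi_sixteen_zero hK
    rw [hconj y hy, hy]
    linear_combination (y ^ 2 + y + 1) * h2
  have ty2 : ∀ y : K, psi (y ^ 2) = psi y := fun y => by simpa using psi_pow y 1
  interval_cases r
  · rw [show ZMod.χ₈ ((2 * 0 + 1 : ℕ) : ZMod 8) = 1 by decide, one_mul]
    apply hpos
    rw [hff, show (y ^ 3) ^ 2 ^ 0 * ((y ^ 3) ^ 2 ^ (2 * 0 + 1) + y ^ 3) = y ^ 2 + y by grind]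
    exact tw y hy
  · rw [show ZMod.χ₈ ((2 * 1 + 1 : ℕ) : ZMod 8) = -1 by decide]
    apply hneg
    · intro y hy
      rw [hff, show y ^ 2 ^ 1 * (y ^ 2 ^ (2 * 1 + 1) + y) = y ^ 3 + y ^ 2 + y + 1 by grind]
      simp [psi_add, ty2, t3 y hy, ty y hy, t1]
    · rw [hff, show (y ^ 3) ^ 2 ^ 1 * ((y ^ 3) ^ 2 ^ (2 * 1 + 1) + y ^ 3) = y ^ 3 + y + 1 by grind]
      simp [psi_add, t3 y hy, ty y hy, t1]
  · rw [show ZMod.χ₈ ((2 * 2 + 1 : ℕ) : ZMod 8) = -1 by decide]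
    apply hneg
    · intro y hy
      have e := h16 y
      rw [hff, show y ^ 2 ^ 2 * (y ^ 2 ^ (2 * 2 + 1) + y) = y ^ 4 * ((y ^ 16) ^ 2 + y) by ring, e,
        show y ^ 4 * (y ^ 2 + y) = y ^ 3 + y by grind]
      simp [psi_add, t3 y hy, ty y hy]
    · have e := h16 (y ^ 3)
      rw [hff, show (y ^ 3) ^ 2 ^ 2 * ((y ^ 3) ^ 2 ^ (2 * 2 + 1) + y ^ 3)
        = (y ^ 3) ^ 4 * (((y ^ 3) ^ 16) ^ 2 + y ^ 3) by ring, e,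
        show (y ^ 3) ^ 4 * ((y ^ 3) ^ 2 + y ^ 3) = y ^ 3 + 1 by grind]
      simp [psi_add, t3 y hy, t1]
  · rw [show ZMod.χ₈ ((2 * 3 + 1 : ℕ) : ZMod 8) = 1 by decide, one_mul]
    apply hpos
    have e := h16 (y ^ 3)
    rw [hff, show (y ^ 3) ^ 2 ^ 3 * ((y ^ 3) ^ 2 ^ (2 * 3 + 1) + y ^ 3)
        = (y ^ 3) ^ 8 * (((y ^ 3) ^ 16) ^ 8 + y ^ 3) by ring, e,
        show (y ^ 3) ^ 8 * ((y ^ 3) ^ 8 + y ^ 3) = (y ^ 2 + y) + 1 by grind]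
    rw [psi_add, tw y hy, t1]; rfl

end

theorem chi_sq (n : ℕ) (hn : Odd n) :
    ZMod.χ₈ (n : ZMod 8) * ZMod.χ₈ (n : ZMod 8) = 1 := by
  obtain ⟨k, rfl⟩ := hn
  push_cast
  generalize (k : ZMod 8) = a
  revert a; decide

theorem SS_eq (m : ℕ) : ∀ n : ℕ, n ∣ 2 * m + 1 → ∀ (K : Type) [Field K] [Fintype K]
    [Algebra (ZMod 2) K], Fintype.card K = 2 ^ (4 * n) →
    SS m K = ZMod.χ₈ (n : ZMod 8) * ZMod.χ₈ ((2 * m + 1 : ℕ) : ZMod 8) * 2 ^ ((5 * n + 1) / 2) := by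
  intro n
  induction n using Nat.strong_induction_on with
  | _ n ih =>
  intro hdvd K _ _ _ hK
  have hn0 : 0 < n := Nat.pos_of_dvd_of_pos hdvd (by omega)
  have hodd : Odd n := Odd.of_dvd_nat ⟨m, rfl⟩ hdvd
  by_cases h1 : n = 1
  · subst h1
    rw [base_case hK m]
    simp
  obtain ⟨p, hp, hpn⟩ := Nat.exists_prime_and_dvd h1
  haveI : Fact p.Prime := ⟨hp⟩
  obtain ⟨n', hn'⟩ := hpn
  rw [mul_comm] at hn'
  have hoddp : Odd p := Odd.of_dvd_nat hodd ⟨n', by rw [hn', mul_comm]⟩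
  have hoddn' : Odd n' := Odd.of_dvd_nat hodd ⟨p, hn'⟩
  have hn'0 : 0 < n' := hoddn'.pos
  obtain ⟨E, hcE, hmod⟩ := SS_modEq (K := K) m p n' hoddp hn'0 (by rw [hK, hn'])
  letI : Fintype E := Fintype.ofFinite E
  have hmod := @hmod _
  have hlt : n' < n := by
    rw [hn']; exact lt_mul_of_one_lt_right hn'0 hp.one_lt
  rw [ih n' hlt (Dvd.dvd.trans ⟨p, hn'⟩ hdvd) E (by rw [Fintype.card_eq_nat_card, hcE])] at hmod
  obtain ⟨t, ht⟩ := hdvd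
  have hsq := SS_sq (K := K) m n t hn0 hK ht
  have hp2 : p ≠ 2 := by rintro rfl; exact absurd hoddp (by decide)
  -- comparison modulo p
  have hA : ZMod.χ₈ (n : ZMod 8) * ZMod.χ₈ ((2 * m + 1 : ℕ) : ZMod 8) * 2 ^ ((5 * n + 1) / 2) ≡
      ZMod.χ₈ (n' : ZMod 8) * ZMod.χ₈ ((2 * m + 1 : ℕ) : ZMod 8) * 2 ^ ((5 * n' + 1) / 2)
      [ZMOD p] := by
    rw [← ZMod.intCast_eq_intCast_iff]
    have he := legendreSym.eq_pow p 2
    rw [legendreSym.at_two hp2] at he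
    have hexp : (5 * n + 1) / 2 = (5 * n' + 1) / 2 + p / 2 * (5 * n') := by
      obtain ⟨a, rfl⟩ := hoddn'
      obtain ⟨b, rfl⟩ := hoddp
      have e1 : (2 * b + 1) / 2 = b := by omega
      have e2 : (5 * (2 * a + 1) + 1) / 2 = 5 * a + 3 := by omega
      have e3 : 5 * n + 1 = 2 * (5 * a + 3 + b * (5 * (2 * a + 1))) := by rw [hn']; ring
      rw [e1, e2, e3, Nat.mul_div_cancel_left _ two_pos]
    have hchi : ZMod.χ₈ (n : ZMod 8) = ZMod.χ₈ (n' : ZMod 8) * ZMod.χ₈ (p : ZMod 8) := by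
      rw [hn', Nat.cast_mul, map_mul]
    have hone : ZMod.χ₈ (p : ZMod 8) * ZMod.χ₈ (p : ZMod 8) ^ (5 * n') = 1 := by
      obtain ⟨a, ha⟩ := hoddn'
      rw [← pow_succ', show 5 * n' + 1 = 2 * (5 * a + 3) by rw [ha]; ring, pow_mul, sq,
        chi_sq p hoddp, one_pow]
    have hone' := congrArg (Int.cast : ℤ → ZMod p) hone
    rw [hchi, hexp, pow_add, pow_mul]
    push_cast at hone' he ⊢
    rw [← he]
    linear_combination ((ZMod.χ₈ (n' : ZMod 8) : ℤ) : ZMod p) *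
      ((ZMod.χ₈ (2 * m + 1 : ZMod 8) : ℤ) : ZMod p) * 2 ^ ((5 * n' + 1) / 2) * hone'
  have hX : (ZMod.χ₈ (n : ZMod 8) * ZMod.χ₈ ((2 * m + 1 : ℕ) : ZMod 8)) *
      (ZMod.χ₈ (n : ZMod 8) * ZMod.χ₈ ((2 * m + 1 : ℕ) : ZMod 8)) = 1 := by
    rw [mul_mul_mul_comm, chi_sq n hodd, chi_sq (2 * m + 1) ⟨m, rfl⟩, one_mul]
  generalize ZMod.χ₈ (n : ZMod 8) * ZMod.χ₈ ((2 * m + 1 : ℕ) : ZMod 8) = X at hA hX ⊢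
  have h2e : (2 : ℤ) ^ (5 * n + 1) = 2 ^ ((5 * n + 1) / 2) * 2 ^ ((5 * n + 1) / 2) := by
    rw [← pow_add]
    congr 1
    obtain ⟨a, ha⟩ := hodd
    omega
  have hprod : (SS m K - X * 2 ^ ((5 * n + 1) / 2)) * (SS m K + X * 2 ^ ((5 * n + 1) / 2)) = 0 := by
    linear_combination hsq + h2e - 2 ^ ((5 * n + 1) / 2) * 2 ^ ((5 * n + 1) / 2) * hX
  rcases mul_eq_zero.1 hprod with h | h
  · linarith
  · exfalso
    have hS : SS m K = -(X * 2 ^ ((5 * n + 1) / 2)) := by linarith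
    have hc := hmod.trans hA.symm
    rw [hS] at hc
    have hd := hc.dvd
    have hd2 : (p : ℤ) ∣ 2 ^ ((5 * n + 1) / 2 + 1) := by
      have := Dvd.dvd.mul_left hd X
      have e : X * (X * 2 ^ ((5 * n + 1) / 2) - -(X * 2 ^ ((5 * n + 1) / 2)))
          = 2 ^ ((5 * n + 1) / 2 + 1) := by
        linear_combination 2 ^ ((5 * n + 1) / 2) * 2 * hX
      rwa [e] at this
    have hd3 : p ∣ 2 ^ ((5 * n + 1) / 2 + 1) := by exact_mod_cast hd2
    exact hp2 ((Nat.prime_dvd_prime_iff_eq hp Nat.prime_two).1 (hp.dvd_of_dvd_pow hd3))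

theorem sum_twist {K : Type} [Field K] [Fintype K] [Algebra (ZMod 2) K] (m : ℕ) (c : K)
    (hc : c ≠ 0) (hcq : c ^ 2 ^ (2 * m + 1) = c) : ∑ y : K, psi (c * ff m y) = SS m K := by
  have hone : (1 : ℕ) ≤ 2 ^ m := Nat.one_le_two_pow
  obtain ⟨d, hd, hd1, hdq⟩ : ∃ d : K, d ≠ 0 ∧ d ^ 2 ^ m * d = c ∧ d ^ 2 ^ (2 * m + 1) = d := by
    refine ⟨(c ^ (2 * (2 ^ m - 1)))⁻¹, by simp [hc], ?_, ?_⟩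
    · rw [← pow_succ, inv_pow, inv_eq_iff_eq_inv, ← mul_eq_one_iff_eq_inv₀ hc, ← pow_mul,
        ← pow_succ]
      have e : 2 * (2 ^ m - 1) * (2 ^ m + 1) + 1 + 1 = 2 ^ (2 * m + 1) := by
        obtain ⟨a, ha⟩ := Nat.exists_eq_add_of_le hone
        rw [pow_succ, mul_comm 2 m, pow_mul, ha, Nat.add_sub_cancel_left]
        ring
      have : c ^ (2 * (2 ^ m - 1) * (2 ^ m + 1) + 1) * c = 1 * c := by
        rw [← pow_succ, e, hcq, one_mul]
      exact mul_right_cancel₀ hc this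
    · rw [inv_pow, ← pow_mul, mul_comm, pow_mul, hcq]
  unfold SS
  rw [← Equiv.sum_comp (Equiv.mulLeft₀ d hd) (fun y => psi (ff m y))]
  refine Finset.sum_congr rfl fun y _ => ?_
  congr 1
  change c * ff m y = ff m (d * y)
  simp only [ff, mul_pow, hdq]
  rw [← hd1]; ring

theorem count_main {K : Type} [Field K] [Fintype K] [Algebra (ZMod 2) K] [DecidableEq K] (m : ℕ)
    (hK : Fintype.card K = 2 ^ (4 * (2 * m + 1))) :
    ((Finset.univ.filter fun p : K × K => p.2 ^ 2 ^ (2 * m + 1) + p.2 + ff m p.1 = 0).card : ℤ)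
      = (2 ^ (2 * m + 1)) ^ 4 + (2 ^ (2 * m + 1) - 1) * 2 ^ (5 * m + 3) := by
  have h2 := two_zero (K := K)
  have hcard : (Fintype.card K : ℤ) ≠ 0 := by
    have := Fintype.card_pos (α := K)
    positivity
  have hS : SS m K = 2 ^ (5 * m + 3) := by
    rw [SS_eq m (2 * m + 1) dvd_rfl K hK, chi_sq _ ⟨m, rfl⟩, one_mul]
    congr 1
    omega
  apply mul_left_cancel₀ hcard
  rw [Finset.card_filter]
  push_cast
  rw [Finset.mul_sum]
  have e1 : ∀ p : K × K, (Fintype.card K : ℤ) *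
      (if p.2 ^ 2 ^ (2 * m + 1) + p.2 + ff m p.1 = 0 then 1 else 0)
      = ∑ c : K, psi ((p.2 ^ 2 ^ (2 * m + 1) + p.2 + ff m p.1) * c) := by
    intro p
    rw [sum_psi_mul]; split_ifs <;> simp
  rw [Finset.sum_congr rfl fun p _ => e1 p, Finset.sum_comm]
  have e2 : ∀ c : K, ∑ p : K × K, psi ((p.2 ^ 2 ^ (2 * m + 1) + p.2 + ff m p.1) * c)
      = if c ^ 2 ^ (2 * m + 1) = c then
        (Fintype.card K : ℤ) * (if c = 0 then (Fintype.card K : ℤ) else SS m K) else 0 := by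
    intro c
    have e3 : ∀ y z : K, psi ((z ^ 2 ^ (2 * m + 1) + z + ff m y) * c)
        = psi (c * ff m y) * psi ((c ^ 2 ^ (2 * m + 1) + c) * z ^ 2 ^ (2 * m + 1)) := by
      intro y z
      rw [show (z ^ 2 ^ (2 * m + 1) + z + ff m y) * c
        = c * ff m y + c * z + c * z ^ 2 ^ (2 * m + 1) by ring, psi_add, psi_add,
        ← psi_pow (c * z) (2 * m + 1), mul_assoc, ← psi_add, mul_pow, ← add_mul]
    rw [Fintype.sum_prod_type]
    simp only [e3]
    simp only [← Finset.mul_sum, sum_psi_mul_pow]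
    have hiff : c ^ 2 ^ (2 * m + 1) + c = 0 ↔ c ^ 2 ^ (2 * m + 1) = c := by
      constructor
      · intro h; linear_combination h - c * h2
      · intro h; rw [h]; linear_combination c * h2
    simp only [hiff]
    rw [← Finset.sum_mul]
    split_ifs with h h0
    · subst h0; simp [psi_zero]
    · rw [sum_twist m c h0 h, mul_comm]
    · simp
  rw [Finset.sum_congr rfl fun c _ => e2 c, ← Finset.sum_filter, ← Finset.mul_sum]
  congr 1
  have hf := card_fix (K := K) (2 * m + 1) 1 (by omega) odd_one hK
  rw [mul_one] at hf
  have h0 : (0 : K) ∈ Finset.univ.filter (fun x : K => x ^ 2 ^ (2 * m + 1) = x) := by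
    simp
  rw [← Finset.add_sum_erase _ _ h0, if_pos rfl, Finset.sum_congr rfl (g := fun _ => SS m K)
    (fun x hx => if_neg (Finset.ne_of_mem_erase hx)), Finset.sum_const, Finset.card_erase_of_mem h0,
    hf, hS, hK, nsmul_eq_mul, Nat.cast_sub Nat.one_le_two_pow]
  push_cast
  rw [mul_comm 4, pow_mul]

theorem suzuki_maximal_q_fourth
    (m : ℕ) (hm : 1 ≤ m) (q0 q g : ℕ)
    (hq0 : q0 = 2 ^ m) (hq : q = 2 ^ (2 * m + 1)) (hg : g = q0 * (q - 1)) :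
    {p : GaloisField 2 (4 * (2 * m + 1)) × GaloisField 2 (4 * (2 * m + 1)) |
        p.2 ^ q + p.2 = p.1 ^ (q0 + q) + p.1 ^ (q0 + 1)}.ncard = q ^ 4 + 2 * q ^ 2 * g := by
  classical
  letI : Fintype (GaloisField 2 (4 * (2 * m + 1))) := Fintype.ofFinite _
  have hK : Fintype.card (GaloisField 2 (4 * (2 * m + 1))) = 2 ^ (4 * (2 * m + 1)) := by
    rw [Fintype.card_eq_nat_card, GaloisField.card 2 _ (by omega)]
  have h2 := two_zero (K := GaloisField 2 (4 * (2 * m + 1)))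
  have h := count_main m hK
  have hset : {p : GaloisField 2 (4 * (2 * m + 1)) × GaloisField 2 (4 * (2 * m + 1)) |
        p.2 ^ q + p.2 = p.1 ^ (q0 + q) + p.1 ^ (q0 + 1)} =
      ((Finset.univ.filter fun p : GaloisField 2 (4 * (2 * m + 1)) ×
        GaloisField 2 (4 * (2 * m + 1)) => p.2 ^ 2 ^ (2 * m + 1) + p.2 + ff m p.1 = 0 :
        Finset _) : Set _) := by
    ext p
    simp only [Set.mem_ofPred_eq, Finset.coe_filter, Finset.mem_univ, true_and]
    have e : p.1 ^ (q0 + q) + p.1 ^ (q0 + 1) = ff m p.1 := by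
      unfold ff
      rw [← hq, ← hq0]; ring
    rw [e, hq]
    constructor
    · intro h; rw [h]; linear_combination ff m p.1 * h2
    · intro h; linear_combination h - ff m p.1 * h2
  rw [hset, Set.ncard_coe_finset]
  zify
  rw [h, hg, hq0]
  have hq1 : 1 ≤ q := by rw [hq]; exact Nat.one_le_two_pow
  push_cast [Nat.cast_sub hq1]
  rw [hq]
  push_cast
  have e5 : (2 : ℤ) ^ (5 * m + 3) = 2 * (2 ^ (2 * m + 1)) ^ 2 * 2 ^ m := by
    rw [← pow_mul, ← pow_succ', ← pow_add]
    congr 1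
    ring
  rw [e5]
  generalize (2 : ℤ) ^ (2 * m + 1) = Q
  ring
end
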